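/- arXiv:1910.03541 — 2 statements merged into one kernel-verified Lean document; each statement's English description precedes it below -/
import Mathlib

section
/- Let α ∈ (1,2) and γ > 0. Then there exists ρ ∈ (0, 1/16] such that the following holds. Let H := {x ∈ ℝ² : x₂ > 0} be the open upper half-plane, and let w be continuous on closure(H) ∩ (closure(B_{1/(2ρ)}) \ B_{2ρ}), twice continuously differentiable with Δw = w₁₁ + w₂₂ = 0 on H ∩ (B_{1/(2ρ)} \ closure(B_{2ρ})), with w = 0 at every point of {x₂ = 0} with 2ρ < |x| < 1/(2ρ), and |w(x)| ≤ |x|^α for all x ∈ H with 2ρ ≤ |x| ≤ 1/(2ρ). Then |w(x)| ≤ γ for every x ∈ closure(H) with |x| = 1. -/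
/-!
Write `w` in logarithmic polar coordinates, `|x| = e ^ s` with angle `θ ∈ [0, π]`, and let
`c_k(s) = ∫ θ in 0..π, w (e ^ s (cos θ, sin θ)) sin (k θ)` be its sine coefficients. Since `w` is
harmonic and vanishes at `θ = 0, π`, one has `c_k'' = k² c_k`, and hence the three-point identity
`c_k(s + h) + c_k(s - h) = 2 cosh (k h) c_k(s)` (`three_term`). The growth condition gives
`|c_k(s)| ≤ π e ^ (α s)`.

* For `k ≥ 2`, centring the identity at `s = 0` gives `|c_k(0)| ≤ 2 π e ^ ((α - k) h)`, which is
  small because `α < 2` (`coeff_high`).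
* For `k = 1`, this would be useless; instead the identity is centred at `s = -h`, so that it
  extrapolates from the inner circles: `|c_1(0)| ≤ 3 π e ^ (-(α - 1) h)`, small because `α > 1`
  (`coeff_one`).

The bounds are summable in `k`, with a sum that tends to `0` as `h → ∞`, and the absolutely
convergent sine series of `w` on the unit semicircle gives the claim (`sine_series_bound`).
The annulus used is `e ^ (-(2h+1)) ≤ |x| ≤ e ^ (2h+1)`, that is, `ρ = e ^ (-(2h+1)) / 2`.

As `w` is only continuous up to the flat boundary, the coefficients are not differentiated.
Instead, Green's identity with the test function `sinh (k (h - s)) sin (k θ)` is applied to the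
translates `w (x + δ e₂)`, which are `C²` on the closed half-annulus and nearly vanish on its flat
part; then `δ → 0`.
-/

noncomputable section

open Set Metric

/-- The Euclidean plane ℝ². -/
abbrev E2 : Type := EuclideanSpace ℝ (Fin 2)

/-- First partial derivative ∂_i. -/
def pd (i : Fin 2) (f : E2 → ℝ) : E2 → ℝ := fun x => fderiv ℝ f x (EuclideanSpace.single i 1)

/-- Second partial derivative ∂_i ∂_j. -/
def pd2 (i j : Fin 2) (f : E2 → ℝ) : E2 → ℝ := pd i (pd j f)

/-- The open first quadrant Q. -/
def Qset : Set E2 := {x | 0 < x 0 ∧ 0 < x 1}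

/-- q(x) = |x|²/2. -/
def qfun (x : E2) : ℝ := ‖x‖ ^ 2 / 2

/-- The Monge–Ampère operator det D²u = u₁₁ u₂₂ − u₁₂². -/
def MA (u : E2 → ℝ) (x : E2) : ℝ := pd2 0 0 u x * pd2 1 1 u x - (pd2 0 1 u x) ^ 2

/-- P_c^+(x) = ½x₁² + ½x₂² + √(1−c) x₁x₂. -/
def Pplus (c : ℝ) (x : E2) : ℝ := x 0 ^ 2 / 2 + x 1 ^ 2 / 2 + Real.sqrt (1 - c) * (x 0 * x 1)

/-- P_c^-(x) = ½x₁² + ½x₂² − √(1−c) x₁x₂. -/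
def Pminus (c : ℝ) (x : E2) : ℝ := x 0 ^ 2 / 2 + x 1 ^ 2 / 2 - Real.sqrt (1 - c) * (x 0 * x 1)

/-- β_c^- = π / arccos(−√(1−c)). -/
def betam (c : ℝ) : ℝ := Real.pi / Real.arccos (-(Real.sqrt (1 - c)))

/-- A global solution (without the sign condition u ≥ 0): u is continuous and convex on Q̄,
smooth in Q, its first and second partial derivatives extend continuously to Q̄ \ {0},
det D²u = c in Q, and u = q on ∂Q. -/
structure IsGlobalSolutionNS (c : ℝ) (u : E2 → ℝ) : Prop where
  cont : ContinuousOn u (closure Qset)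
  conv : ConvexOn ℝ (closure Qset) u
  smooth : ContDiffOn ℝ (⊤ : ℕ∞) u Qset
  ext1 : ∀ i : Fin 2, ∃ g : E2 → ℝ, ContinuousOn g (closure Qset \ {0}) ∧ ∀ x ∈ Qset, g x = pd i u x
  ext2 : ∀ i j : Fin 2, ∃ g : E2 → ℝ, ContinuousOn g (closure Qset \ {0}) ∧ ∀ x ∈ Qset, g x = pd2 i j u x
  ma : ∀ x ∈ Qset, MA u x = c
  bdry : ∀ x ∈ frontier Qset, u x = qfun x

/-- A global solution: additionally u ≥ 0 on Q̄. -/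
structure IsGlobalSolution (c : ℝ) (u : E2 → ℝ) extends IsGlobalSolutionNS c u : Prop where
  nonneg : ∀ x ∈ closure Qset, 0 ≤ u x

/-- The open upper half-plane. -/
def Hup : Set E2 := {x | 0 < x 1}

/-! ### Green's identity on a rectangle -/

/-- Green's identity on `[0, h] × [0, π]` for a harmonic `V` with partial derivatives `A`, `B`, and
the test function `sinh (k (h - s)) sin (k θ)`, which is harmonic and vanishes for `s = h` and for
`θ = 0, π`. The hypothesis `A = 0` on `s = 0` removes the only boundary term with a derivative
of `V`. -/
lemma green_half (V A B : ℝ × ℝ → ℝ) (A' B' : ℝ × ℝ → ℝ × ℝ →L[ℝ] ℝ) (h : ℝ) (hh : 0 ≤ h) (k : ℕ)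
    (hV : ∀ p ∈ Icc 0 h ×ˢ Icc 0 Real.pi, HasFDerivAt V
      (A p • ContinuousLinearMap.fst ℝ ℝ ℝ + B p • ContinuousLinearMap.snd ℝ ℝ ℝ) p)
    (hA : ∀ p ∈ Icc 0 h ×ˢ Icc 0 Real.pi, HasFDerivAt A (A' p) p)
    (hB : ∀ p ∈ Icc 0 h ×ˢ Icc 0 Real.pi, HasFDerivAt B (B' p) p)
    (hlap : ∀ p ∈ Icc 0 h ×ˢ Icc 0 Real.pi, A' p (1, 0) + B' p (0, 1) = 0)
    (hA0 : ∀ θ ∈ Icc 0 Real.pi, A (0, θ) = 0) :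
    (k : ℝ) * ((∫ θ in (0:ℝ)..Real.pi, V (h, θ) * Real.sin (k * θ))
      - Real.cosh (k * h) * ∫ θ in (0:ℝ)..Real.pi, V (0, θ) * Real.sin (k * θ))
      = (k : ℝ) * ((∫ s in (0:ℝ)..h, V (s, Real.pi) * Real.cos (k * Real.pi) *
            Real.sinh (k * (h - s)))
          - ∫ s in (0:ℝ)..h, V (s, 0) * Real.sinh (k * (h - s))) := by
  have hle : ((0:ℝ), (0:ℝ)) ≤ (h, Real.pi) := Prod.mk_le_mk.2 ⟨hh, Real.pi_pos.le⟩
  have hI : Icc ((0:ℝ), (0:ℝ)) (h, Real.pi) = Icc 0 h ×ˢ Icc 0 Real.pi := by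
    rw [Icc_prod_eq]
  let ψ : ℝ × ℝ → ℝ := fun p => Real.sinh (k * (h - p.1)) * Real.sin (k * p.2)
  let ψs : ℝ × ℝ → ℝ := fun p => -k * Real.cosh (k * (h - p.1)) * Real.sin (k * p.2)
  let ψt : ℝ × ℝ → ℝ := fun p => k * Real.sinh (k * (h - p.1)) * Real.cos (k * p.2)
  have h1 : ∀ p : ℝ × ℝ, HasFDerivAt (fun p : ℝ × ℝ => (k:ℝ) * (h - p.1))
      ((-k : ℝ) • ContinuousLinearMap.fst ℝ ℝ ℝ) p := fun p => by
    have := ((hasFDerivAt_fst (𝕜 := ℝ) (p := p)).const_sub h).const_mul (k : ℝ)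
    exact this.congr_fderiv (by ext <;> simp)
  have h2 : ∀ p : ℝ × ℝ, HasFDerivAt (fun p : ℝ × ℝ => (k:ℝ) * p.2)
      ((k : ℝ) • ContinuousLinearMap.snd ℝ ℝ ℝ) p := fun p =>
    (hasFDerivAt_snd (𝕜 := ℝ) (p := p)).const_mul (k : ℝ)
  have hψ : ∀ p, HasFDerivAt ψ _ p := fun p => (h1 p).sinh.mul (h2 p).sin
  have hψs : ∀ p, HasFDerivAt ψs _ p := fun p => ((h1 p).cosh.const_mul (-(k:ℝ))).mul (h2 p).sin
  have hψt : ∀ p, HasFDerivAt ψt _ p := fun p => ((h1 p).sinh.const_mul (k:ℝ)).mul (h2 p).cos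
  have hF := fun p hp => ((hA p hp).mul (hψ p)).sub ((hV p hp).mul (hψs p))
  have hG := fun p hp => ((hB p hp).mul (hψ p)).sub ((hV p hp).mul (hψt p))
  have key := MeasureTheory.integral_divergence_prod_Icc_of_hasFDerivAt_of_le
    (A * ψ - V * ψs) (B * ψ - V * ψt) _ _ (0, 0) (h, Real.pi) hle
    (fun p hp => (hF p (hI ▸ hp)).continuousAt.continuousWithinAt)
    (fun p hp => (hG p (hI ▸ hp)).continuousAt.continuousWithinAt)
    (fun p hp => hF p ⟨Ioo_subset_Icc_self hp.1, Ioo_subset_Icc_self hp.2⟩)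
    (fun p hp => hG p ⟨Ioo_subset_Icc_self hp.1, Ioo_subset_Icc_self hp.2⟩)
  -- the integrand of the divergence theorem vanishes on the rectangle, so its total flux is zero
  have aux : ∀ (D : ℝ × ℝ → ℝ) (R : ℝ), EqOn D (fun _ => 0) (Icc ((0:ℝ), (0:ℝ)) (h, Real.pi)) →
      (MeasureTheory.IntegrableOn D (Icc ((0:ℝ), (0:ℝ)) (h, Real.pi)) →
        ∫ p in Icc ((0:ℝ), (0:ℝ)) (h, Real.pi), D p = R) → R = 0 := by
    intro D R hD hR
    rw [← hR ((MeasureTheory.integrableOn_congr_fun hD measurableSet_Icc).2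
      MeasureTheory.integrableOn_zero), MeasureTheory.setIntegral_congr_fun measurableSet_Icc hD]
    simp
  have key2 := aux _ _ (fun p hp => by
    have e := hlap p (hI ▸ hp)
    simp [ψ, ψs, ψt]
    linear_combination (Real.sinh (k * (h - p.1)) * Real.sin (k * p.2)) * e) key
  clear key
  have i1 : ∫ x in (0:ℝ)..h, (B * ψ - V * ψt) (x, Real.pi) =
      -k * ∫ s in (0:ℝ)..h, V (s, Real.pi) * Real.cos (k * Real.pi) * Real.sinh (k * (h - s)) := by
    rw [← intervalIntegral.integral_const_mul]
    congr 1; ext s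
    simp [ψ, ψt, Real.sin_nat_mul_pi]; ring
  have i2 : ∫ x in (0:ℝ)..h, (B * ψ - V * ψt) (x, 0) =
      -k * ∫ s in (0:ℝ)..h, V (s, 0) * Real.sinh (k * (h - s)) := by
    rw [← intervalIntegral.integral_const_mul]
    congr 1; ext s
    simp [ψ, ψt]; ring
  have i3 : ∫ y in (0:ℝ)..Real.pi, (A * ψ - V * ψs) (h, y) =
      k * ∫ θ in (0:ℝ)..Real.pi, V (h, θ) * Real.sin (k * θ) := by
    rw [← intervalIntegral.integral_const_mul]
    congr 1; ext s
    simp [ψ, ψs]; ring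
  have i4 : ∫ y in (0:ℝ)..Real.pi, (A * ψ - V * ψs) (0, y) =
      k * (Real.cosh (k * h) * ∫ θ in (0:ℝ)..Real.pi, V (0, θ) * Real.sin (k * θ)) := by
    rw [← intervalIntegral.integral_const_mul, ← intervalIntegral.integral_const_mul]
    refine intervalIntegral.integral_congr fun θ hθ => ?_
    rw [uIcc_of_le Real.pi_pos.le] at hθ
    simp [ψ, ψs, hA0 θ hθ]; ring
  simp only at key2
  rw [i1, i2, i3, i4] at key2
  linear_combination key2

/-- The three-point identity for the sine coefficients of a harmonic `W` on `[-h, h] × [0, π]`, up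
to an error controlled by the boundary values at `θ = 0, π`. It follows from `green_half` for the
even part `W (s, θ) + W (-s, θ)`, whose `s`-derivative vanishes at `s = 0`. -/
lemma green_sym (W A B : ℝ × ℝ → ℝ) (A' B' : ℝ × ℝ → ℝ × ℝ →L[ℝ] ℝ) (h : ℝ) (hh : 0 ≤ h) (k : ℕ)
    (hk : 1 ≤ k) (M : ℝ)
    (hW : ∀ p ∈ Icc (-h) h ×ˢ Icc 0 Real.pi, HasFDerivAt W
      (A p • ContinuousLinearMap.fst ℝ ℝ ℝ + B p • ContinuousLinearMap.snd ℝ ℝ ℝ) p)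
    (hA : ∀ p ∈ Icc (-h) h ×ˢ Icc 0 Real.pi, HasFDerivAt A (A' p) p)
    (hB : ∀ p ∈ Icc (-h) h ×ˢ Icc 0 Real.pi, HasFDerivAt B (B' p) p)
    (hlap : ∀ p ∈ Icc (-h) h ×ˢ Icc 0 Real.pi, A' p (1, 0) + B' p (0, 1) = 0)
    (h0 : ∀ s ∈ Icc (-h) h, |W (s, 0)| ≤ M) (hpi : ∀ s ∈ Icc (-h) h, |W (s, Real.pi)| ≤ M) :
    |(∫ θ in (0:ℝ)..Real.pi, W (h, θ) * Real.sin (k * θ))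
      + (∫ θ in (0:ℝ)..Real.pi, W (-h, θ) * Real.sin (k * θ))
      - 2 * Real.cosh (k * h) * ∫ θ in (0:ℝ)..Real.pi, W (0, θ) * Real.sin (k * θ)|
      ≤ 4 * M * Real.sinh (k * h) * h := by
  have hmem : ∀ p ∈ Icc 0 h ×ˢ Icc 0 Real.pi, p ∈ Icc (-h) h ×ˢ Icc 0 Real.pi := fun p hp =>
    ⟨⟨by linarith [hp.1.1], hp.1.2⟩, hp.2⟩
  have hmem' : ∀ p ∈ Icc 0 h ×ˢ Icc 0 Real.pi, ((-p.1, p.2) : ℝ × ℝ) ∈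
      Icc (-h) h ×ˢ Icc 0 Real.pi := fun p hp =>
    ⟨⟨neg_le_neg hp.1.2, by linarith [hp.1.1]⟩, hp.2⟩
  let R : ℝ × ℝ →L[ℝ] ℝ × ℝ :=
    (-ContinuousLinearMap.fst ℝ ℝ ℝ).prod (ContinuousLinearMap.snd ℝ ℝ ℝ)
  have hR : ∀ p : ℝ × ℝ, HasFDerivAt (fun p : ℝ × ℝ => ((-p.1, p.2) : ℝ × ℝ)) R p := fun p =>
    R.hasFDerivAt
  have key := green_half (fun p => W p + W (-p.1, p.2)) (fun p => A p - A (-p.1, p.2))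
    (fun p => B p + B (-p.1, p.2)) (fun p => A' p - (A' (-p.1, p.2)).comp R)
    (fun p => B' p + (B' (-p.1, p.2)).comp R) h hh k ?_ ?_ ?_ ?_ ?_
  rotate_left
  · intro p hp
    refine ((hW p (hmem p hp)).add ((hW _ (hmem' p hp)).comp p (hR p))).congr_fderiv ?_
    ext <;> simp [R]; ring
  · intro p hp
    exact (hA p (hmem p hp)).sub ((hA _ (hmem' p hp)).comp p (hR p))
  · intro p hp
    exact (hB p (hmem p hp)).add ((hB _ (hmem' p hp)).comp p (hR p))
  · intro p hp
    have e1 := hlap _ (hmem p hp)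
    have e2 := hlap _ (hmem' p hp)
    have e3 : (A' (-p.1, p.2)) (-1, 0) = -(A' (-p.1, p.2)) (1, 0) := by
      rw [← map_neg]; simp
    simp [R, e3]
    linarith
  · intro θ hθ; simp
  have hk0 : (k : ℝ) ≠ 0 := by positivity
  have key := mul_left_cancel₀ hk0 key
  have hint : ∀ s ∈ Icc (-h) h, IntervalIntegrable (fun θ => W (s, θ) * Real.sin (k * θ))
      MeasureTheory.volume 0 Real.pi := by
    intro s hs
    refine ContinuousOn.intervalIntegrable fun θ hθ => ?_
    rw [uIcc_of_le Real.pi_pos.le] at hθ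
    have : ContinuousAt (fun θ => W (s, θ)) θ :=
      ContinuousAt.comp (f := fun θ : ℝ => (s, θ)) (hW (s, θ) ⟨hs, hθ⟩).continuousAt (by fun_prop)
    exact (this.mul (by fun_prop)).continuousWithinAt
  have hbd : ∀ (f : ℝ → ℝ), (∀ s ∈ Icc 0 h, |f s| ≤ 2 * M) →
      |∫ s in (0:ℝ)..h, f s * Real.sinh (k * (h - s))| ≤ 2 * M * Real.sinh (k * h) * h := by
    intro f hf
    have := intervalIntegral.norm_integral_le_of_norm_le_const (a := 0) (b := h)
      (f := fun s => f s * Real.sinh (k * (h - s))) (C := 2 * M * Real.sinh (k * h)) ?_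
    · simpa [abs_of_nonneg hh] using this
    · intro s hs
      rw [uIoc_of_le hh] at hs
      have hs' : s ∈ Icc 0 h := ⟨hs.1.le, hs.2⟩
      have h1 : 0 ≤ (k:ℝ) * (h - s) := mul_nonneg (by positivity) (by linarith [hs.2])
      have h2 : (k:ℝ) * (h - s) ≤ k * h := mul_le_mul_of_nonneg_left (by linarith [hs.1]) (by positivity)
      rw [norm_mul, Real.norm_eq_abs, Real.norm_eq_abs,
        abs_of_nonneg (Real.sinh_nonneg_iff.2 h1)]
      exact mul_le_mul (hf s hs') (Real.sinh_le_sinh.2 h2) (Real.sinh_nonneg_iff.2 h1)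
        ((abs_nonneg _).trans (hf s hs'))
  have habs : ∀ a b : ℝ, |a| ≤ M → |b| ≤ M → |a + b| ≤ 2 * M := fun a b ha hb =>
    (abs_add_le a b).trans (by linarith)
  have b1 := hbd (fun s => W (s, 0) + W (-s, 0)) (fun s hs =>
    habs _ _ (h0 _ ⟨by linarith [hs.1], hs.2⟩) (h0 _ ⟨by linarith [hs.2], by linarith [hs.1]⟩))
  have b2 := hbd (fun s => (W (s, Real.pi) + W (-s, Real.pi)) * Real.cos (k * Real.pi))
    (fun s hs => by
      rw [abs_mul]
      refine (mul_le_of_le_one_right (abs_nonneg _) (Real.abs_cos_le_one _)).trans ?_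
      exact habs _ _ (hpi _ ⟨by linarith [hs.1], hs.2⟩) (hpi _ ⟨by linarith [hs.2], by linarith [hs.1]⟩))
  have e1 : ∫ θ in (0:ℝ)..Real.pi, (W (h, θ) + W (-h, θ)) * Real.sin (k * θ) =
      (∫ θ in (0:ℝ)..Real.pi, W (h, θ) * Real.sin (k * θ))
      + (∫ θ in (0:ℝ)..Real.pi, W (-h, θ) * Real.sin (k * θ)) := by
    rw [← intervalIntegral.integral_add (hint _ ⟨by linarith, le_rfl⟩)
      (hint _ ⟨le_rfl, by linarith⟩)]
    congr 1; ext θ; ring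
  have e2 : ∫ θ in (0:ℝ)..Real.pi, (W (0, θ) + W (-0, θ)) * Real.sin (k * θ) =
      2 * (∫ θ in (0:ℝ)..Real.pi, W (0, θ) * Real.sin (k * θ)) := by
    rw [← intervalIntegral.integral_const_mul]
    congr 1; ext θ; rw [neg_zero]; ring
  simp only [e1, e2] at key
  have e3 : (∫ θ in (0:ℝ)..Real.pi, W (h, θ) * Real.sin (k * θ))
      + (∫ θ in (0:ℝ)..Real.pi, W (-h, θ) * Real.sin (k * θ))
      - 2 * Real.cosh (k * h) * ∫ θ in (0:ℝ)..Real.pi, W (0, θ) * Real.sin (k * θ) =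
      (∫ s in (0:ℝ)..h, (W (s, Real.pi) + W (-s, Real.pi)) * Real.cos (k * Real.pi) *
        Real.sinh (k * (h - s))) - ∫ s in (0:ℝ)..h, (W (s, 0) + W (-s, 0)) * Real.sinh (k * (h - s)) := by
    rw [← key]; ring
  rw [e3]
  refine (abs_sub _ _).trans ?_
  linarith

/-! ### Sine series -/

/-- A continuous function on `[0, π]` vanishing at the endpoints is bounded by `2 / π` times the sum
of its absolute sine coefficients: the odd extension to the circle of length `2 π` has absolutely
summable Fourier coefficients, so it is the sum of its Fourier series. -/
lemma sine_series_bound (u : ℝ → ℝ) (hu : ContinuousOn u (Icc 0 Real.pi)) (u0 : u 0 = 0)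
    (upi : u Real.pi = 0) (b : ℕ → ℝ) (S : ℝ) (hS : HasSum b S)
    (hb : ∀ k : ℕ, |∫ θ in (0:ℝ)..Real.pi, u θ * Real.sin (k * θ)| ≤ b k)
    (θ : ℝ) (hθ : θ ∈ Icc 0 Real.pi) : |u θ| ≤ 2 / Real.pi * S := by
  have hpi := Real.pi_pos
  have : Fact (0 < 2 * Real.pi) := ⟨by positivity⟩
  have hb0 : ∀ k, 0 ≤ b k := fun k => (abs_nonneg _).trans (hb k)
  -- the odd extension of `u` to `[-π, π]`; this formula uses `u 0 = 0`
  let g : ℝ → ℂ := fun x => ((u (max x 0) - u (max (-x) 0) : ℝ) : ℂ)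
  have gpos : ∀ x, 0 ≤ x → g x = u x := fun x hx => by
    simp [g, max_eq_left hx, max_eq_right (neg_nonpos.2 hx), u0]
  have gneg : ∀ x, 0 ≤ x → g (-x) = -u x := fun x hx => by
    simp [g, max_eq_left hx, max_eq_right (neg_nonpos.2 hx), u0]
  have hIcc : Icc (-Real.pi) (-Real.pi + 2 * Real.pi) = Icc (-Real.pi) Real.pi := by
    congr 1; ring
  have gc : ContinuousOn g (Icc (-Real.pi) (-Real.pi + 2 * Real.pi)) := by
    rw [hIcc]
    refine Complex.continuous_ofReal.comp_continuousOn (ContinuousOn.sub ?_ ?_)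
    · exact hu.comp (by fun_prop) fun x hx => ⟨le_max_right _ _, max_le hx.2 hpi.le⟩
    · exact hu.comp (by fun_prop) fun x hx => ⟨le_max_right _ _, max_le (by linarith [hx.1]) hpi.le⟩
  have gper : g (-Real.pi) = g (-Real.pi + 2 * Real.pi) := by
    rw [show -Real.pi + 2 * Real.pi = Real.pi by ring, gneg _ hpi.le, gpos _ hpi.le, upi]; simp
  let F : C(AddCircle (2 * Real.pi), ℂ) :=
    ⟨AddCircle.liftIco (2 * Real.pi) (-Real.pi) g, AddCircle.liftIco_continuous gper gc⟩
  have Fg : ∀ x ∈ Icc (-Real.pi) Real.pi, F (x : AddCircle (2 * Real.pi)) = g x := by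
    intro x hx
    rcases hx.2.lt_or_eq with h | h
    · exact AddCircle.liftIco_coe_apply (f := g) (p := 2 * Real.pi) (a := -Real.pi) ⟨hx.1, by linarith⟩
    · have e : (x : AddCircle (2 * Real.pi)) = ((-Real.pi : ℝ) : AddCircle (2 * Real.pi)) := by
        rw [← AddCircle.coe_add_period (2 * Real.pi) (-Real.pi), h]
        congr 1; ring
      have e' : F ((-Real.pi : ℝ) : AddCircle (2 * Real.pi)) = g (-Real.pi) :=
        AddCircle.liftIco_coe_apply (f := g) (p := 2 * Real.pi) (a := -Real.pi) ⟨le_rfl, by linarith⟩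
      rw [e, e', gper, h]
      congr 1; ring
  have coeff : ∀ n : ℤ, fourierCoeff F n = (-Complex.I / Real.pi) *
      ((∫ x in (0:ℝ)..Real.pi, u x * Real.sin (n * x) : ℝ) : ℂ) := by
    intro n
    have e := fourierCoeff_eq_intervalIntegral F n (-Real.pi)
    have hint : ∀ a b, a ∈ Icc (-Real.pi) Real.pi → b ∈ Icc (-Real.pi) Real.pi →
        IntervalIntegrable (fun x : ℝ => Complex.exp (-(Complex.I * n * x)) * g x)
        MeasureTheory.volume a b := by
      intro a b ha hb
      refine ContinuousOn.intervalIntegrable (ContinuousOn.mul (by fun_prop) (gc.mono ?_))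
      rw [hIcc]
      exact uIcc_subset_Icc ha hb
    have hexp : ∀ x : ℝ, x ∈ Icc (-Real.pi) Real.pi →
        (fourier (-n) (x : AddCircle (2 * Real.pi)) : ℂ) • F (x : AddCircle (2 * Real.pi)) =
        Complex.exp (-(Complex.I * n * x)) * g x := by
      intro x hx
      rw [fourier_coe_apply, smul_eq_mul, Fg x hx]
      congr 2
      have : (Real.pi : ℂ) ≠ 0 := by exact_mod_cast hpi.ne'
      push_cast
      field_simp
    have hint2 := (hint (-Real.pi) 0 (by constructor <;> linarith) (by constructor <;> linarith))
    rw [e, show -Real.pi + 2 * Real.pi = Real.pi by ring,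
      intervalIntegral.integral_congr (g := fun x : ℝ => Complex.exp (-(Complex.I * n * x)) * g x)
        (fun x hx => hexp x (by rwa [uIcc_of_le (by linarith)] at hx))]
    rw [← intervalIntegral.integral_add_adjacent_intervals hint2
      (hint 0 Real.pi (by constructor <;> linarith) (by constructor <;> linarith))]
    have e2 : ∫ x in (-Real.pi)..0, Complex.exp (-(Complex.I * n * x)) * g x =
        ∫ x in (0:ℝ)..Real.pi, Complex.exp (-(Complex.I * n * (-x : ℝ))) * g (-x) := by
      have := intervalIntegral.integral_comp_neg (a := 0) (b := Real.pi)
        (fun x : ℝ => Complex.exp (-(Complex.I * n * x)) * g x)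
      rw [this, neg_zero]
    have hint3 : IntervalIntegrable (fun x : ℝ =>
        Complex.exp (-(Complex.I * n * (-x : ℝ))) * g (-x)) MeasureTheory.volume 0 Real.pi := by
      refine ContinuousOn.intervalIntegrable (ContinuousOn.mul (by fun_prop) ?_)
      refine gc.comp (by fun_prop) fun x hx => ?_
      rw [uIcc_of_le hpi.le] at hx
      rw [hIcc]
      constructor <;> linarith [hx.1, hx.2]
    rw [e2, ← intervalIntegral.integral_add hint3
      (hint 0 Real.pi (by constructor <;> linarith) (by constructor <;> linarith)),
      ← intervalIntegral.integral_ofReal, ← intervalIntegral.integral_const_mul,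
      ← intervalIntegral.integral_smul]
    refine intervalIntegral.integral_congr fun x hx => ?_
    rw [uIcc_of_le hpi.le] at hx
    simp only [gneg x hx.1, gpos x hx.1]
    have : (Real.pi : ℂ) ≠ 0 := by exact_mod_cast hpi.ne'
    have s1 : Complex.exp (-(Complex.I * n * x)) =
        Complex.cos (n * x) - Complex.sin (n * x) * Complex.I := by
      rw [← Complex.cos_neg, ← neg_neg (Complex.sin _), ← Complex.sin_neg, neg_mul, sub_neg_eq_add,
        ← Complex.exp_mul_I]
      congr 1; ring
    have s2 : Complex.exp (-(Complex.I * n * (-x : ℝ))) =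
        Complex.cos (n * x) + Complex.sin (n * x) * Complex.I := by
      rw [← Complex.exp_mul_I]; push_cast
      congr 1; ring
    rw [s1, s2]
    simp only [Complex.real_smul]
    push_cast
    field_simp
    ring
  have ncoeff : ∀ n : ℤ, ‖fourierCoeff F n‖ ≤ 1 / Real.pi * b n.natAbs := by
    intro n
    rw [coeff, norm_mul, norm_div, norm_neg, Complex.norm_I, Complex.norm_real, Complex.norm_real,
      Real.norm_eq_abs, Real.norm_eq_abs, abs_of_pos hpi]
    refine mul_le_mul_of_nonneg_left ?_ (by positivity)
    refine le_trans (le_of_eq ?_) (hb n.natAbs)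
    obtain ⟨m, rfl | rfl⟩ := n.eq_nat_or_neg
    · simp
    · simp [intervalIntegral.integral_neg, abs_neg]
  have hS1 : HasSum (fun n : ℕ => b (n + 1)) (S - b 0) := by
    have := (hasSum_nat_add_iff' 1).2 hS
    simpa using this
  have hSZ : HasSum (fun n : ℤ => 1 / Real.pi * b n.natAbs) (1 / Real.pi * (S + (S - b 0))) := by
    refine HasSum.mul_left _ (HasSum.of_nat_of_neg_add_one ?_ ?_)
    · simpa using hS
    · have e : ∀ n : ℕ, (-((n : ℤ) + 1)).natAbs = n + 1 := fun n => by omega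
      simpa only [e] using hS1
  have hsum : Summable (fourierCoeff F) := Summable.of_norm_bounded hSZ.summable ncoeff
  have hpt := has_pointwise_sum_fourier_series_of_summable hsum (θ : AddCircle (2 * Real.pi))
  have hfin : ‖F (θ : AddCircle (2 * Real.pi))‖ ≤ 1 / Real.pi * (S + (S - b 0)) := by
    rw [← hpt.tsum_eq]
    refine tsum_of_norm_bounded hSZ fun n => ?_
    rw [norm_smul, fourier_apply, Circle.norm_coe, mul_one]
    exact ncoeff n
  have hle : 1 / Real.pi * (S + (S - b 0)) ≤ 2 / Real.pi * S := by
    have : 1 / Real.pi * (S + (S - b 0)) = 2 / Real.pi * S - 1 / Real.pi * b 0 := by ring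
    have h2 : 0 ≤ 1 / Real.pi * b 0 := mul_nonneg (by positivity) (hb0 0)
    linarith
  rw [Fg θ ⟨by linarith [hθ.1], hθ.2⟩, gpos θ hθ.1, Complex.norm_real] at hfin
  exact hfin.trans hle

/-! ### Polar coordinates -/

/-- The standard basis of the plane. -/
def bv (i : Fin 2) : E2 := EuclideanSpace.single i 1

/-- The point with polar coordinates `(r, θ)`, translated upwards by `δ`. The translation moves the
closed half-annulus into the open half-plane. -/
def Epol (δ r θ : ℝ) : E2 := (r * Real.cos θ) • bv 0 + (r * Real.sin θ + δ) • bv 1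

@[simp] lemma Epol_zero (δ r θ : ℝ) : Epol δ r θ 0 = r * Real.cos θ := by simp [Epol, bv]
@[simp] lemma Epol_one (δ r θ : ℝ) : Epol δ r θ 1 = r * Real.sin θ + δ := by simp [Epol, bv]

lemma norm_sq_E2 (x : E2) : ‖x‖ ^ 2 = x 0 ^ 2 + x 1 ^ 2 := by
  rw [EuclideanSpace.real_norm_sq_eq, Fin.sum_univ_two]

lemma norm_Epol (r θ : ℝ) (hr : 0 ≤ r) : ‖Epol 0 r θ‖ = r := by
  rw [← sq_eq_sq₀ (norm_nonneg _) hr, norm_sq_E2, Epol_zero, Epol_one]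
  linear_combination r ^ 2 * Real.sin_sq_add_cos_sq θ

lemma Epol_sub (δ r θ : ℝ) : Epol δ r θ = Epol 0 r θ + δ • bv 1 := by
  simp only [Epol]; module

lemma dist_Epol (δ r θ : ℝ) (hδ : 0 ≤ δ) : dist (Epol δ r θ) (Epol 0 r θ) = δ := by
  rw [Epol_sub, dist_eq_norm]
  simp [bv, norm_smul, abs_of_nonneg hδ]

lemma le_norm_Epol (δ r θ : ℝ) (hδ : 0 ≤ δ) (hr : 0 ≤ r) (hθ : 0 ≤ Real.sin θ) :
    r ≤ ‖Epol δ r θ‖ := by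
  refine le_of_sq_le_sq ?_ (norm_nonneg _)
  rw [norm_sq_E2, Epol_zero, Epol_one]
  have := Real.sin_sq_add_cos_sq θ
  nlinarith [mul_nonneg (mul_nonneg hr hθ) hδ]

lemma norm_Epol_le (δ r θ : ℝ) (hδ : 0 ≤ δ) (hr : 0 ≤ r) : ‖Epol δ r θ‖ ≤ r + δ := by
  rw [Epol_sub]
  refine (norm_add_le _ _).trans ?_
  rw [norm_Epol _ _ hr]
  simp [bv, norm_smul, abs_of_nonneg hδ]

section
variable (l δ : ℝ)

lemma hasFDerivAt_X (p : ℝ × ℝ) : HasFDerivAt (fun p : ℝ × ℝ => l * Real.exp p.1 * Real.cos p.2)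
    ((l * Real.exp p.1 * Real.cos p.2) • ContinuousLinearMap.fst ℝ ℝ ℝ
      - (l * Real.exp p.1 * Real.sin p.2) • ContinuousLinearMap.snd ℝ ℝ ℝ) p := by
  refine ((((hasFDerivAt_fst (𝕜 := ℝ) (p := p)).exp).const_mul l).mul
    (hasFDerivAt_snd (𝕜 := ℝ) (p := p)).cos).congr_fderiv ?_
  ext <;> simp; ring

lemma hasFDerivAt_Y (p : ℝ × ℝ) : HasFDerivAt (fun p : ℝ × ℝ => l * Real.exp p.1 * Real.sin p.2)
    ((l * Real.exp p.1 * Real.sin p.2) • ContinuousLinearMap.fst ℝ ℝ ℝ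
      + (l * Real.exp p.1 * Real.cos p.2) • ContinuousLinearMap.snd ℝ ℝ ℝ) p := by
  refine ((((hasFDerivAt_fst (𝕜 := ℝ) (p := p)).exp).const_mul l).mul
    (hasFDerivAt_snd (𝕜 := ℝ) (p := p)).sin).congr_fderiv ?_
  ext <;> simp; ring

/-- The chain rule in the logarithmic polar coordinates `(s, θ) ↦ l e ^ s (cos θ, sin θ)`. -/
lemma hasFDerivAt_comp_Epol (f : E2 → ℝ) (p : ℝ × ℝ)
    (hf : DifferentiableAt ℝ f (Epol δ (l * Real.exp p.1) p.2)) :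
    HasFDerivAt (fun p : ℝ × ℝ => f (Epol δ (l * Real.exp p.1) p.2))
      ((pd 0 f (Epol δ (l * Real.exp p.1) p.2) * (l * Real.exp p.1 * Real.cos p.2)
        + pd 1 f (Epol δ (l * Real.exp p.1) p.2) * (l * Real.exp p.1 * Real.sin p.2)) •
          ContinuousLinearMap.fst ℝ ℝ ℝ +
       (pd 1 f (Epol δ (l * Real.exp p.1) p.2) * (l * Real.exp p.1 * Real.cos p.2)
        - pd 0 f (Epol δ (l * Real.exp p.1) p.2) * (l * Real.exp p.1 * Real.sin p.2)) •
          ContinuousLinearMap.snd ℝ ℝ ℝ) p := by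
  have h := ((hasFDerivAt_X l p).smul_const (bv 0)).add
    (((hasFDerivAt_Y l p).add_const δ).smul_const (bv 1))
  refine (hf.hasFDerivAt.comp p h).congr_fderiv ?_
  ext <;> simp [pd, bv] <;> ring

/-- Harmonicity is preserved by the conformal change to logarithmic polar coordinates: the
functions differentiated here are the partial derivatives of `w` in those coordinates, as
computed in `hasFDerivAt_comp_Epol`. -/
lemma polar_harmonic (w : E2 → ℝ) (U : Set E2) (hU : IsOpen U) (hw : ContDiffOn ℝ 2 w U)
    (hΔ : ∀ x ∈ U, pd2 0 0 w x + pd2 1 1 w x = 0) (p : ℝ × ℝ)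
    (hp : Epol δ (l * Real.exp p.1) p.2 ∈ U) :
    ∃ A' B' : ℝ × ℝ →L[ℝ] ℝ,
      HasFDerivAt (fun p : ℝ × ℝ =>
        pd 0 w (Epol δ (l * Real.exp p.1) p.2) * (l * Real.exp p.1 * Real.cos p.2)
        + pd 1 w (Epol δ (l * Real.exp p.1) p.2) * (l * Real.exp p.1 * Real.sin p.2)) A' p ∧
      HasFDerivAt (fun p : ℝ × ℝ =>
        pd 1 w (Epol δ (l * Real.exp p.1) p.2) * (l * Real.exp p.1 * Real.cos p.2)
        - pd 0 w (Epol δ (l * Real.exp p.1) p.2) * (l * Real.exp p.1 * Real.sin p.2)) B' p ∧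
      A' (1, 0) + B' (0, 1) = 0 := by
  have hd : ∀ i, DifferentiableAt ℝ (pd i w) (Epol δ (l * Real.exp p.1) p.2) := by
    intro i
    have h1 : ContDiffOn ℝ 1 (fderiv ℝ w) U := hw.fderiv_of_isOpen hU (by norm_num)
    have h2 := (h1.differentiableOn (by norm_num)).differentiableAt (hU.mem_nhds hp)
    exact h2.clm_apply (differentiableAt_const _)
  have d0 := hasFDerivAt_comp_Epol l δ (pd 0 w) p (hd 0)
  have d1 := hasFDerivAt_comp_Epol l δ (pd 1 w) p (hd 1)
  refine ⟨_, _, (d0.mul (hasFDerivAt_X l p)).add (d1.mul (hasFDerivAt_Y l p)),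
    (d1.mul (hasFDerivAt_X l p)).sub (d0.mul (hasFDerivAt_Y l p)), ?_⟩
  have e := hΔ _ hp
  simp only [pd2] at e
  simp
  linear_combination ((l * Real.exp p.1) ^ 2 * (Real.cos p.2 ^ 2 + Real.sin p.2 ^ 2)) * e
end

/-- The three-point identity for the sine coefficients of a harmonic function vanishing on the flat
part of the boundary of a half-annulus. -/
lemma three_term (w : E2 → ℝ) (r₁ r₂ : ℝ)
    (hc : ContinuousOn w {x | 0 ≤ x 1 ∧ r₁ ≤ ‖x‖ ∧ ‖x‖ ≤ r₂})
    (hw : ContDiffOn ℝ 2 w {x | 0 < x 1 ∧ r₁ < ‖x‖ ∧ ‖x‖ < r₂})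
    (hΔ : ∀ x ∈ {x : E2 | 0 < x 1 ∧ r₁ < ‖x‖ ∧ ‖x‖ < r₂}, pd2 0 0 w x + pd2 1 1 w x = 0)
    (h0 : ∀ x : E2, x 1 = 0 → r₁ < ‖x‖ → ‖x‖ < r₂ → w x = 0)
    (l h : ℝ) (hl : 0 < l) (hh : 0 ≤ h) (hr₁ : r₁ < l * Real.exp (-h)) (hr₂ : l * Real.exp h < r₂)
    (k : ℕ) (hk : 1 ≤ k) :
    (∫ θ in (0:ℝ)..Real.pi, w (Epol 0 (l * Real.exp h) θ) * Real.sin (k * θ))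
      + (∫ θ in (0:ℝ)..Real.pi, w (Epol 0 (l * Real.exp (-h)) θ) * Real.sin (k * θ))
      = 2 * Real.cosh (k * h) *
        ∫ θ in (0:ℝ)..Real.pi, w (Epol 0 l θ) * Real.sin (k * θ) := by
  have hpi := Real.pi_pos
  have hc1 : Continuous (fun x : E2 => x 1) := by fun_prop
  have hUo : IsOpen {x : E2 | 0 < x 1 ∧ r₁ < ‖x‖ ∧ ‖x‖ < r₂} := by
    refine (isOpen_lt continuous_const hc1).inter
      ((isOpen_lt continuous_const continuous_norm).inter
        (isOpen_lt continuous_norm continuous_const))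
  have hSc : IsCompact {x : E2 | 0 ≤ x 1 ∧ r₁ ≤ ‖x‖ ∧ ‖x‖ ≤ r₂} := by
    refine Metric.isCompact_of_isClosed_isBounded ?_ ?_
    · exact (isClosed_le continuous_const hc1).inter
        ((isClosed_le continuous_const continuous_norm).inter
        (isClosed_le continuous_norm continuous_const))
    · refine (isBounded_closedBall (x := (0:E2)) (r := r₂)).subset fun x hx => ?_
      simpa using hx.2.2
  have huc := hSc.uniformContinuousOn_of_continuous hc
  rw [Metric.uniformContinuousOn_iff] at huc
  -- `T` is the defect of the identity; it is bounded by `C * η` for every `η > 0`, by means of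
  -- an upward translation small enough to change `w` by at most `η`
  set T := (∫ θ in (0:ℝ)..Real.pi, w (Epol 0 (l * Real.exp h) θ) * Real.sin (k * θ))
      + (∫ θ in (0:ℝ)..Real.pi, w (Epol 0 (l * Real.exp (-h)) θ) * Real.sin (k * θ))
      - 2 * Real.cosh (k * h) *
        ∫ θ in (0:ℝ)..Real.pi, w (Epol 0 l θ) * Real.sin (k * θ) with hT
  have hexp : ∀ s ∈ Icc (-h) h, r₁ < l * Real.exp s ∧ l * Real.exp s < r₂ := fun s hs =>
    ⟨hr₁.trans_le (mul_le_mul_of_nonneg_left (Real.exp_le_exp.2 hs.1) hl.le),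
      (mul_le_mul_of_nonneg_left (Real.exp_le_exp.2 hs.2) hl.le).trans_lt hr₂⟩
  have hsin : ∀ θ ∈ Icc 0 Real.pi, 0 ≤ Real.sin θ := fun θ hθ =>
    Real.sin_nonneg_of_nonneg_of_le_pi hθ.1 hθ.2
  have main : ∀ η > 0, |T| ≤
      (4 * Real.sinh (k * h) * h + Real.pi * (2 + 2 * Real.cosh (k * h))) * η := by
    intro η hη
    obtain ⟨δ₀, hδ₀, huc⟩ := huc η hη
    obtain ⟨δ, hδ, hδ1, hδ2⟩ : ∃ δ > 0, δ < δ₀ ∧ δ < r₂ - l * Real.exp h := by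
      obtain ⟨δ, h1, h2⟩ := exists_between (lt_min hδ₀ (sub_pos.2 hr₂))
      exact ⟨δ, h1, h2.trans_le (min_le_left _ _), h2.trans_le (min_le_right _ _)⟩
    have hexp2 : ∀ s ∈ Icc (-h) h, l * Real.exp s + δ < r₂ := fun s hs => by
      have := mul_le_mul_of_nonneg_left (Real.exp_le_exp.2 hs.2) hl.le
      linarith
    have hmemU : ∀ p ∈ Icc (-h) h ×ˢ Icc 0 Real.pi, Epol δ (l * Real.exp p.1) p.2 ∈
        {x : E2 | 0 < x 1 ∧ r₁ < ‖x‖ ∧ ‖x‖ < r₂} := fun p hp => by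
      have hr : 0 ≤ l * Real.exp p.1 := by positivity
      have hs := hsin _ hp.2
      refine ⟨by rw [Epol_one]; positivity, ?_, ?_⟩
      · exact (hexp _ hp.1).1.trans_le (le_norm_Epol _ _ _ hδ.le hr hs)
      · exact (norm_Epol_le _ _ _ hδ.le hr).trans_lt (hexp2 _ hp.1)
    have hclose : ∀ s ∈ Icc (-h) h, ∀ θ ∈ Icc 0 Real.pi,
        |w (Epol δ (l * Real.exp s) θ) - w (Epol 0 (l * Real.exp s) θ)| ≤ η := by
      intro s hs θ hθ
      have hr : 0 ≤ l * Real.exp s := by positivity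
      obtain ⟨m1, m2, m3⟩ := hmemU (s, θ) ⟨hs, hθ⟩
      refine (huc _ ⟨m1.le, m2.le, m3.le⟩ _ ⟨?_, ?_, ?_⟩ ?_).le
      · rw [Epol_one, add_zero]; exact mul_nonneg hr (hsin θ hθ)
      · rw [norm_Epol _ _ hr]; exact (hexp s hs).1.le
      · rw [norm_Epol _ _ hr]; exact (hexp s hs).2.le
      · rwa [dist_Epol _ _ _ hδ.le]
    have hbdry : ∀ s ∈ Icc (-h) h, ∀ θ ∈ Icc 0 Real.pi, Real.sin θ = 0 →
        |w (Epol δ (l * Real.exp s) θ)| ≤ η := by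
      intro s hs θ hθ h_sin
      have hr : 0 ≤ l * Real.exp s := by positivity
      have := hclose s hs θ hθ
      rwa [h0 (Epol 0 (l * Real.exp s) θ) (by simp [h_sin])
        (by rw [norm_Epol _ _ hr]; exact (hexp s hs).1)
        (by rw [norm_Epol _ _ hr]; exact (hexp s hs).2), sub_zero] at this
    choose! A' B' hA hB hAB using fun (p : ℝ × ℝ) (hp : p ∈ Icc (-h) h ×ˢ Icc 0 Real.pi) =>
      polar_harmonic l δ w _ hUo hw hΔ p (hmemU p hp)
    have key := green_sym (fun p => w (Epol δ (l * Real.exp p.1) p.2)) _ _ A' B' h hh k hk η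
      (fun p hp => hasFDerivAt_comp_Epol l δ w p
        ((hw.differentiableOn (by norm_num)).differentiableAt (hUo.mem_nhds (hmemU p hp))))
      hA hB hAB (fun s hs => hbdry s hs 0 ⟨le_rfl, hpi.le⟩ Real.sin_zero)
      (fun s hs => hbdry s hs _ ⟨hpi.le, le_rfl⟩ Real.sin_pi)
    have hi0 : ∀ s ∈ Icc (-h) h, IntervalIntegrable
        (fun θ => w (Epol 0 (l * Real.exp s) θ) * Real.sin (k * θ))
        MeasureTheory.volume 0 Real.pi := by
      intro s hs
      have hr : 0 ≤ l * Real.exp s := by positivity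
      refine ContinuousOn.intervalIntegrable (ContinuousOn.mul (hc.comp ?_ ?_) (by fun_prop))
      · unfold Epol; fun_prop
      · intro θ hθ
        rw [uIcc_of_le hpi.le] at hθ
        refine ⟨?_, ?_, ?_⟩
        · rw [Epol_one, add_zero]; exact mul_nonneg hr (hsin θ hθ)
        · rw [norm_Epol _ _ hr]; exact (hexp s hs).1.le
        · rw [norm_Epol _ _ hr]; exact (hexp s hs).2.le
    have hi1 : ∀ s ∈ Icc (-h) h, IntervalIntegrable
        (fun θ => w (Epol δ (l * Real.exp s) θ) * Real.sin (k * θ))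
        MeasureTheory.volume 0 Real.pi := by
      intro s hs
      refine ContinuousOn.intervalIntegrable
        (ContinuousOn.mul (hw.continuousOn.comp ?_ ?_) (by fun_prop))
      · unfold Epol; fun_prop
      · intro θ hθ
        rw [uIcc_of_le hpi.le] at hθ
        exact hmemU (s, θ) ⟨hs, hθ⟩
    have hdiff : ∀ s ∈ Icc (-h) h,
        |(∫ θ in (0:ℝ)..Real.pi, w (Epol δ (l * Real.exp s) θ) * Real.sin (k * θ))
        - ∫ θ in (0:ℝ)..Real.pi, w (Epol 0 (l * Real.exp s) θ) * Real.sin (k * θ)|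
        ≤ Real.pi * η := by
      intro s hs
      rw [← intervalIntegral.integral_sub (hi1 s hs) (hi0 s hs)]
      have := intervalIntegral.norm_integral_le_of_norm_le_const (a := 0) (b := Real.pi) (C := η)
        (f := fun θ => w (Epol δ (l * Real.exp s) θ) * Real.sin (k * θ)
          - w (Epol 0 (l * Real.exp s) θ) * Real.sin (k * θ)) ?_
      · rw [sub_zero, abs_of_pos hpi, mul_comm η] at this
        exact this
      · intro θ hθ
        rw [uIoc_of_le hpi.le] at hθ
        rw [← sub_mul, norm_mul]
        exact (mul_le_of_le_one_right (norm_nonneg _) (Real.abs_sin_le_one _)).trans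
          (hclose s hs θ ⟨hθ.1.le, hθ.2⟩)
    have a1 := abs_le.1 (hdiff h ⟨by linarith, le_rfl⟩)
    have a2 := abs_le.1 (hdiff (-h) ⟨le_rfl, by linarith⟩)
    have a3 := hdiff 0 ⟨by linarith, hh⟩
    simp only [Real.exp_zero, mul_one] at a3 key
    have hcosh : 0 < Real.cosh (k * h) := Real.cosh_pos _
    have a4 := abs_le.1 ((abs_mul (2 * Real.cosh (k * h)) _).trans_le
      (mul_le_mul (abs_of_pos (by positivity)).le a3 (abs_nonneg _) (by positivity)))
    have a5 := abs_le.1 key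
    rw [abs_le, hT]
    constructor
    · linarith [a1.1, a1.2, a2.1, a2.2, a4.1, a4.2, a5.1, a5.2]
    · linarith [a1.1, a1.2, a2.1, a2.2, a4.1, a4.2, a5.1, a5.2]
  have hT0 : T = 0 := by
    rw [← abs_nonpos_iff]
    set C := 4 * Real.sinh (k * h) * h + Real.pi * (2 + 2 * Real.cosh (k * h))
    have hC : 0 < C := by
      have h1 : 0 ≤ Real.sinh (k * h) := Real.sinh_nonneg_iff.2 (by positivity)
      have h2 : 0 < Real.cosh (k * h) := Real.cosh_pos _
      positivity
    refine le_of_forall_pos_le_add fun ε hε => ?_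
    have := main (ε / C) (by positivity)
    rw [mul_div_cancel₀ _ hC.ne'] at this
    linarith
  linarith

/-! ### Estimates for the coefficients -/

lemma abs_sine_coeff_le (u : ℝ → ℝ) (C : ℝ) (hu : ∀ θ ∈ Icc 0 Real.pi, |u θ| ≤ C) (k : ℕ) :
    |∫ θ in (0:ℝ)..Real.pi, u θ * Real.sin (k * θ)| ≤ Real.pi * C := by
  have hpi := Real.pi_pos
  have := intervalIntegral.norm_integral_le_of_norm_le_const (a := 0) (b := Real.pi) (C := C)
    (f := fun θ => u θ * Real.sin (k * θ)) ?_
  · rw [sub_zero, abs_of_pos hpi, mul_comm C] at this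
    exact this
  · intro θ hθ
    rw [uIoc_of_le hpi.le] at hθ
    rw [norm_mul]
    exact (mul_le_of_le_one_right (norm_nonneg _) (Real.abs_sin_le_one _)).trans
      (hu θ ⟨hθ.1.le, hθ.2⟩)

/-- The modes `k ≥ 2`: here `c`, `x`, `y` are the coefficients on the circles of radius `1`,
`e ^ h`, `e ^ (-h)`. -/
lemma coeff_high (α h c x y : ℝ) (k : ℕ) (hα : 0 ≤ α) (hh : 0 ≤ h)
    (e : x + y = 2 * Real.cosh (k * h) * c) (hx : |x| ≤ Real.pi * Real.exp (α * h))
    (hy : |y| ≤ Real.pi * Real.exp (-(α * h))) :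
    |c| ≤ 2 * Real.pi * Real.exp ((α - k) * h) := by
  have hpi := Real.pi_pos
  have h1 : Real.exp (k * h) ≤ 2 * Real.cosh (k * h) := by
    rw [Real.cosh_eq]; linarith [Real.exp_pos (-(k * h))]
  have h2 : Real.exp (-(α * h)) ≤ Real.exp (α * h) :=
    Real.exp_le_exp.2 (by nlinarith [mul_nonneg hα hh])
  have h3 : Real.exp (k * h) * |c| ≤ 2 * Real.pi * Real.exp (α * h) := by
    calc Real.exp (k * h) * |c| ≤ 2 * Real.cosh (k * h) * |c| :=
          mul_le_mul_of_nonneg_right h1 (abs_nonneg _)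
      _ = |x + y| := by
          rw [e, abs_mul, abs_of_pos (a := 2 * Real.cosh (k * h)) (by positivity)]
      _ ≤ |x| + |y| := abs_add_le _ _
      _ ≤ _ := by nlinarith
  have h4 : Real.exp (α * h) = Real.exp (k * h) * Real.exp ((α - k) * h) := by
    rw [← Real.exp_add]; congr 1; ring
  rw [h4] at h3
  refine le_of_mul_le_mul_left ?_ (Real.exp_pos (k * h))
  linarith

/-- The mode `k = 1`: here `c`, `x`, `y` are the coefficients on the circles of radius `1`,
`e ^ (-h)`, `e ^ (-2h)`. -/
lemma coeff_one (α h c x y : ℝ) (hα : 1 ≤ α) (hh : 0 ≤ h)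
    (e : c + y = 2 * Real.cosh h * x) (hx : |x| ≤ Real.pi * Real.exp (-(α * h)))
    (hy : |y| ≤ Real.pi * Real.exp (-(α * (2 * h)))) :
    |c| ≤ 3 * Real.pi * Real.exp (-((α - 1) * h)) := by
  have hpi := Real.pi_pos
  have h1 : 2 * Real.cosh h ≤ 2 * Real.exp h := by
    rw [Real.cosh_eq]; linarith [Real.exp_le_exp.2 (show -h ≤ h by linarith)]
  have h2 : Real.exp (-(α * (2 * h))) ≤ Real.exp (-((α - 1) * h)) :=
    Real.exp_le_exp.2 (by nlinarith)
  have h4 : Real.exp (-((α - 1) * h)) = Real.exp h * Real.exp (-(α * h)) := by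
    rw [← Real.exp_add]; congr 1; ring
  have h5 : |2 * Real.cosh h * x| ≤ 2 * Real.exp h * (Real.pi * Real.exp (-(α * h))) := by
    rw [abs_mul, abs_of_pos (a := 2 * Real.cosh h) (by positivity)]
    exact mul_le_mul h1 hx (abs_nonneg _) (by positivity)
  calc |c| = |2 * Real.cosh h * x - y| := by rw [← e]; congr 1; ring
    _ ≤ |2 * Real.cosh h * x| + |y| := abs_sub _ _
    _ ≤ 2 * Real.exp h * (Real.pi * Real.exp (-(α * h))) + Real.pi * Real.exp (-((α - 1) * h)) :=
        add_le_add h5 (hy.trans (mul_le_mul_of_nonneg_left h2 hpi.le))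
    _ = _ := by rw [h4]; ring

/-- The bounds of `coeff_one` and `coeff_high` form a summable sequence `b`; from `k = 2` on, it is
geometric with ratio `e ^ (-h) ≤ 1 / 2`. -/
lemma majorant_sum (α h : ℝ) (hh : 1 ≤ h) : ∃ (b : ℕ → ℝ) (S : ℝ), HasSum b S ∧ b 0 = 0 ∧
    b 1 = 3 * Real.pi * Real.exp (-((α - 1) * h)) ∧
    (∀ k : ℕ, 2 ≤ k → b k = 2 * Real.pi * Real.exp ((α - k) * h)) ∧
    2 / Real.pi * S ≤ 6 * Real.exp (-((α - 1) * h)) + 8 * Real.exp (-((2 - α) * h)) := by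
  have hpi := Real.pi_pos
  have hq : Real.exp (-h) ≤ 1 / 2 := by
    have h1 : 2 ≤ Real.exp h := by linarith [Real.add_one_le_exp h]
    rw [Real.exp_neg, one_div]
    exact inv_anti₀ two_pos h1
  have hgeo := (hasSum_geometric_of_lt_one (Real.exp_pos (-h)).le (by linarith)).mul_left
    (2 * Real.pi * Real.exp ((α - 2) * h))
  let b : ℕ → ℝ := fun k => if k = 0 then 0 else if k = 1 then
    3 * Real.pi * Real.exp (-((α - 1) * h)) else 2 * Real.pi * Real.exp ((α - k) * h)
  refine ⟨b, 3 * Real.pi * Real.exp (-((α - 1) * h)) +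
    2 * Real.pi * Real.exp ((α - 2) * h) * (1 - Real.exp (-h))⁻¹, ?_, by simp [b], by simp [b],
    fun k hk => ?_, ?_⟩
  · rw [← hasSum_nat_add_iff' 2]
    have e1 : (fun n : ℕ => b (n + 2)) =
        fun n => 2 * Real.pi * Real.exp ((α - 2) * h) * Real.exp (-h) ^ n := by
      funext n
      have : b (n + 2) = 2 * Real.pi * Real.exp ((α - (n + 2 : ℕ)) * h) := by simp [b]
      rw [this, ← Real.exp_nat_mul, mul_assoc (2 * Real.pi), ← Real.exp_add]
      congr 2; push_cast; ring
    have e2 : ∑ i ∈ Finset.range 2, b i = 3 * Real.pi * Real.exp (-((α - 1) * h)) := by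
      simp [Finset.sum_range_succ, b]
    rw [e1, e2, add_sub_cancel_left]
    exact hgeo
  · have h0 : k ≠ 0 := by omega
    have h1 : k ≠ 1 := by omega
    simp [b, h0, h1]
  · have hinv : (1 - Real.exp (-h))⁻¹ ≤ 2 := by
      rw [inv_le_comm₀ (by linarith) two_pos]; linarith
    have e : 2 / Real.pi * (3 * Real.pi * Real.exp (-((α - 1) * h)) +
        2 * Real.pi * Real.exp ((α - 2) * h) * (1 - Real.exp (-h))⁻¹) =
        6 * Real.exp (-((α - 1) * h)) +
        4 * Real.exp (-((2 - α) * h)) * (1 - Real.exp (-h))⁻¹ := by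
      rw [show -((2 - α) * h) = (α - 2) * h by ring]
      field_simp; ring
    rw [e]
    nlinarith [Real.exp_pos (-((2 - α) * h))]

/-! ### The bound on the unit circle -/

lemma closure_Hup : closure Hup = {x : E2 | 0 ≤ x 1} := by
  have hc1 : Continuous (fun x : E2 => x 1) := by fun_prop
  refine Subset.antisymm (closure_minimal (fun x (hx : 0 < x 1) => hx.le)
    (isClosed_le continuous_const hc1)) fun x hx => ?_
  have ht : Filter.Tendsto (fun t : ℝ => x + t • bv 1) (nhdsWithin 0 (Ioi 0)) (nhds x) := by
    have : Continuous (fun t : ℝ => x + t • bv 1) := by fun_prop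
    simpa using (this.tendsto 0).mono_left nhdsWithin_le_nhds
  refine mem_closure_of_tendsto ht (eventually_nhdsWithin_of_forall fun t h_t => ?_)
  have h1 : 0 ≤ x 1 := hx
  have h2 : 0 < t := h_t
  simp [Hup, bv]
  positivity

/-- The estimate on the unit circle in terms of `h`. The extra `1` in the radii `e ^ (±(2h+1))`
keeps the circles of radius `e ^ (-2h)` and `e ^ h` in the open annulus. -/
lemma unit_circle_bound (α h : ℝ) (hα : α ∈ Ioo (1:ℝ) 2) (hh : 1 ≤ h) (w : E2 → ℝ) (r₁ r₂ : ℝ)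
    (hr₁ : r₁ = Real.exp (-(2 * h + 1))) (hr₂ : r₂ = Real.exp (2 * h + 1))
    (hc : ContinuousOn w {x | 0 ≤ x 1 ∧ r₁ ≤ ‖x‖ ∧ ‖x‖ ≤ r₂})
    (hw : ContDiffOn ℝ 2 w {x | 0 < x 1 ∧ r₁ < ‖x‖ ∧ ‖x‖ < r₂})
    (hΔ : ∀ x ∈ {x : E2 | 0 < x 1 ∧ r₁ < ‖x‖ ∧ ‖x‖ < r₂}, pd2 0 0 w x + pd2 1 1 w x = 0)
    (h0 : ∀ x : E2, x 1 = 0 → r₁ < ‖x‖ → ‖x‖ < r₂ → w x = 0)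
    (hb : ∀ x : E2, 0 < x 1 → r₁ ≤ ‖x‖ → ‖x‖ ≤ r₂ → |w x| ≤ ‖x‖ ^ α)
    (x : E2) (hx : 0 ≤ x 1) (hx1 : ‖x‖ = 1) :
    |w x| ≤ 6 * Real.exp (-((α - 1) * h)) + 8 * Real.exp (-((2 - α) * h)) := by
  obtain ⟨hα1, hα2⟩ := hα
  have hpi := Real.pi_pos
  have hsin : ∀ θ ∈ Icc 0 Real.pi, 0 ≤ Real.sin θ := fun θ hθ =>
    Real.sin_nonneg_of_nonneg_of_le_pi hθ.1 hθ.2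
  have hrange : ∀ s, |s| ≤ 2 * h → r₁ < Real.exp s ∧ Real.exp s < r₂ := fun s hs => by
    have := abs_le.1 hs
    rw [hr₁, hr₂]
    exact ⟨Real.exp_lt_exp.2 (by linarith), Real.exp_lt_exp.2 (by linarith)⟩
  -- on the flat boundary `sin θ = 0` the growth condition holds because `w` vanishes there
  have hcoef : ∀ s, |s| ≤ 2 * h → ∀ k : ℕ,
      |∫ θ in (0:ℝ)..Real.pi, w (Epol 0 (Real.exp s) θ) * Real.sin (k * θ)| ≤
        Real.pi * Real.exp (α * s) := by
    intro s hs k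
    refine abs_sine_coeff_le (fun θ => w (Epol 0 (Real.exp s) θ)) _ (fun θ hθ => ?_) k
    have hn := norm_Epol (Real.exp s) θ (Real.exp_pos s).le
    obtain ⟨m1, m2⟩ := hrange s hs
    rcases (hsin θ hθ).lt_or_eq with h1 | h1
    · have := hb (Epol 0 (Real.exp s) θ) (by rw [Epol_one]; positivity) (by rw [hn]; exact m1.le) (by rw [hn]; exact m2.le)
      rwa [hn, ← Real.exp_mul, mul_comm s] at this
    · rw [h0 _ (by rw [Epol_one, ← h1]; simp) (by rw [hn]; exact m1) (by rw [hn]; exact m2), abs_zero]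
      positivity
  obtain ⟨b, S, hS, b0, b1, b2, hSle⟩ := majorant_sum α h hh
  refine le_trans ?_ hSle
  have h1mem := hrange 0 (by rw [abs_zero]; linarith)
  rw [Real.exp_zero] at h1mem
  have hz : ∀ θ, Real.sin θ = 0 → w (Epol 0 1 θ) = 0 := fun θ hθ => by
    have hn := norm_Epol 1 θ zero_le_one
    exact h0 _ (by rw [Epol_one, hθ]; simp) (by rw [hn]; exact h1mem.1) (by rw [hn]; exact h1mem.2)
  have hu : ContinuousOn (fun θ => w (Epol 0 1 θ)) (Icc 0 Real.pi) := by
    refine hc.comp (by unfold Epol; fun_prop) fun θ hθ => ⟨?_, ?_, ?_⟩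
    · rw [Epol_one]; linarith [hsin θ hθ]
    · rw [norm_Epol _ _ zero_le_one]; exact h1mem.1.le
    · rw [norm_Epol _ _ zero_le_one]; exact h1mem.2.le
  have hbk : ∀ k : ℕ, |∫ θ in (0:ℝ)..Real.pi, w (Epol 0 1 θ) * Real.sin (k * θ)| ≤ b k := by
    intro k
    rcases Nat.lt_or_ge k 2 with hk | hk
    · interval_cases k
      · simp [b0]
      · have t := three_term w r₁ r₂ hc hw hΔ h0 (Real.exp (-h)) h (Real.exp_pos _) (by linarith)
          (by rw [← Real.exp_add]; exact (hrange _ (by rw [abs_le]; constructor <;> linarith)).1)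
          (by rw [← Real.exp_add]; exact (hrange _ (by rw [abs_le]; constructor <;> linarith)).2)
          1 le_rfl
        have e1 : Real.exp (-h) * Real.exp h = 1 := by rw [← Real.exp_add]; simp
        have e2 : Real.exp (-h) * Real.exp (-h) = Real.exp (-(2 * h)) := by
          rw [← Real.exp_add]; congr 1; ring
        rw [e1, e2, Nat.cast_one, one_mul] at t
        rw [b1]
        have c1 := hcoef (-h) (by rw [abs_neg, abs_of_nonneg] <;> linarith) 1
        have c2 := hcoef (-(2 * h)) (by rw [abs_neg, abs_of_nonneg]; linarith) 1
        rw [mul_neg] at c1 c2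
        rw [Nat.cast_one] at c1 c2 ⊢
        exact coeff_one α h _ _ _ hα1.le (by linarith) t c1 c2
    · have t := three_term w r₁ r₂ hc hw hΔ h0 1 h one_pos (by linarith)
          (by rw [one_mul]; exact (hrange _ (by rw [abs_le]; constructor <;> linarith)).1)
          (by rw [one_mul]; exact (hrange _ (by rw [abs_le]; constructor <;> linarith)).2)
          k (by omega)
      rw [one_mul, one_mul] at t
      have c1 := hcoef h (by rw [abs_of_nonneg] <;> linarith) k
      have c2 := hcoef (-h) (by rw [abs_neg, abs_of_nonneg] <;> linarith) k
      rw [mul_neg] at c2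
      rw [b2 k hk]
      exact coeff_high α h _ _ _ k (by linarith) (by linarith) t c1 c2
  have hsq := norm_sq_E2 x
  rw [hx1] at hsq
  have hx0 : -1 ≤ x 0 ∧ x 0 ≤ 1 := by constructor <;> nlinarith [sq_nonneg (x 1)]
  have hxE : x = Epol 0 1 (Real.arccos (x 0)) := by
    ext i
    fin_cases i
    · simp [Real.cos_arccos hx0.1 hx0.2]
    · have : 1 - x 0 ^ 2 = x 1 ^ 2 := by linarith
      simp [Real.sin_arccos, this, Real.sqrt_sq hx]
  rw [hxE]
  exact sine_series_bound _ hu (hz 0 Real.sin_zero) (hz _ Real.sin_pi) b S hS hbk _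
    ⟨Real.arccos_nonneg _, Real.arccos_le_pi _⟩

lemma exists_height (α γ : ℝ) (hα : α ∈ Ioo (1:ℝ) 2) (hγ : 0 < γ) : ∃ h : ℝ, 1 ≤ h ∧
    6 * Real.exp (-((α - 1) * h)) + 8 * Real.exp (-((2 - α) * h)) ≤ γ := by
  have hlim : ∀ m : ℝ, 0 < m →
      Filter.Tendsto (fun h : ℝ => Real.exp (-(m * h))) Filter.atTop (nhds 0) := fun m hm =>
    Real.tendsto_exp_neg_atTop_nhds_zero.comp (Filter.tendsto_id.const_mul_atTop hm)
  have := ((hlim _ (sub_pos.2 hα.1)).const_mul 6).add ((hlim _ (sub_pos.2 hα.2)).const_mul 8)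
  simp only [mul_zero, add_zero] at this
  obtain ⟨h, h1, h2⟩ := ((Filter.eventually_ge_atTop 1).and (this.eventually_le_const hγ)).exists
  exact ⟨h, h1, h2⟩

/-- Harmonic functions on large annuli in the half-plane, vanishing on the flat boundary
and growing at most like |x|^α with α ∈ (1,2), are small on the unit circle. -/
theorem stmt12 (α γ : ℝ) (hα : α ∈ Set.Ioo (1:ℝ) 2) (hγ : 0 < γ) :
    ∃ ρ ∈ Set.Ioc (0:ℝ) (1/16),
      ∀ w : E2 → ℝ,
        ContinuousOn w (closure Hup ∩ (closure (ball (0:E2) (1/(2*ρ))) \ ball (0:E2) (2*ρ))) →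
        ContDiffOn ℝ 2 w (Hup ∩ (ball (0:E2) (1/(2*ρ)) \ closure (ball (0:E2) (2*ρ)))) →
        (∀ x ∈ Hup ∩ (ball (0:E2) (1/(2*ρ)) \ closure (ball (0:E2) (2*ρ))),
          pd2 0 0 w x + pd2 1 1 w x = 0) →
        (∀ x : E2, x 1 = 0 → 2*ρ < ‖x‖ → ‖x‖ < 1/(2*ρ) → w x = 0) →
        (∀ x ∈ Hup, 2*ρ ≤ ‖x‖ → ‖x‖ ≤ 1/(2*ρ) → |w x| ≤ ‖x‖ ^ α) →
        ∀ x ∈ closure Hup, ‖x‖ = 1 → |w x| ≤ γ := by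
  obtain ⟨h, hh, hle⟩ := exists_height α γ hα hγ
  have hE : 8 ≤ Real.exp (2 * h + 1) := by
    have h1 : 2 ≤ Real.exp 1 := by linarith [Real.add_one_le_exp 1]
    calc (8 : ℝ) = 2 ^ 3 := by norm_num
      _ ≤ Real.exp 1 ^ 3 := pow_le_pow_left₀ (by norm_num) h1 3
      _ = Real.exp 3 := by rw [← Real.exp_nat_mul]; norm_num
      _ ≤ _ := Real.exp_le_exp.2 (by linarith)
  have e1 : 2 * (Real.exp (-(2 * h + 1)) / 2) = Real.exp (-(2 * h + 1)) := by ring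
  refine ⟨Real.exp (-(2 * h + 1)) / 2, ⟨by positivity, ?_⟩, ?_⟩
  · have : Real.exp (-(2 * h + 1)) ≤ 8⁻¹ := by
      rw [Real.exp_neg]; exact inv_anti₀ (by norm_num) hE
    linarith
  rw [e1, one_div, ← Real.exp_neg, neg_neg]
  set r₁ := Real.exp (-(2 * h + 1)) with hr₁
  set r₂ := Real.exp (2 * h + 1) with hr₂
  have hr₁0 : r₁ ≠ 0 := (Real.exp_pos _).ne'
  have hr₂0 : r₂ ≠ 0 := (Real.exp_pos _).ne'
  intro w hc hw hΔ h0 hb x hx hx1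
  have hS : closure Hup ∩ (closure (ball (0:E2) r₂) \ ball (0:E2) r₁) =
      {x | 0 ≤ x 1 ∧ r₁ ≤ ‖x‖ ∧ ‖x‖ ≤ r₂} := by
    rw [closure_Hup, closure_ball _ hr₂0]
    ext y; simp [and_comm]
  have hU : Hup ∩ (ball (0:E2) r₂ \ closure (ball (0:E2) r₁)) =
      {x | 0 < x 1 ∧ r₁ < ‖x‖ ∧ ‖x‖ < r₂} := by
    rw [closure_ball _ hr₁0]
    ext y; simp [Hup, and_comm]
  rw [hS] at hc
  rw [hU] at hw hΔ
  rw [closure_Hup] at hx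
  exact (unit_circle_bound α h hα hh w r₁ r₂ hr₁ hr₂ hc hw hΔ h0 (fun y hy => hb y hy) x hx
    hx1).trans hle
end
end

section
/- Let α₀ ∈ (1,2) and let H := {x ∈ ℝ² : x₂ > 0} be the open upper half-plane. Suppose v is continuous on closure(H), twice continuously differentiable on H with Δv = v₁₁ + v₂₂ = 0 on H, v = 0 on the line {x₂ = 0}, and |v(x)| ≤ |x|^{α₀} for all x ∈ H. Then v ≡ 0 on closure(H). -/
/-!
Antisymmetrizing `v` about a vertical line `{x₁ = c}` gives a harmonic function on a quadrant which
vanishes on its boundary and has growth order `α₀ < 2`. The quadrant admits a strictly superharmonic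
barrier growing like `|x|^{2s}` for any `0 < s < 1` (`barrier_superharmonic`), so the maximum principle
forces the antisymmetrization to vanish (`quadrant_nonpos`). Hence `v` is symmetric about every
vertical line, so it depends on `x₂` only. Harmonicity makes it affine in `x₂`, and the bound
`|v| ≤ |x|^{α₀}` near the origin, with `α₀ > 1`, makes it zero (`affine_zero`). Only second
derivatives along coordinate lines are needed, so everything is phrased through `HasSecond`.
-/

noncomputable section

open Set Metric

/-! ### Second derivatives of functions of one variable -/

/-- `HasSecond f x a`: `f` is differentiable near `x` and its derivative has derivative `a`
at `x`. -/
def HasSecond (f : ℝ → ℝ) (x a : ℝ) : Prop :=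
  ∃ f' : ℝ → ℝ, (∀ᶠ t in nhds x, HasDerivAt f (f' t) t) ∧ HasDerivAt f' a x

lemma HasSecond.sub {f g : ℝ → ℝ} {x a b : ℝ} (hf : HasSecond f x a) (hg : HasSecond g x b) :
    HasSecond (fun t => f t - g t) x (a - b) := by
  obtain ⟨f', h1, h2⟩ := hf
  obtain ⟨g', h3, h4⟩ := hg
  refine ⟨fun t => f' t - g' t, ?_, h2.sub h4⟩
  filter_upwards [h1, h3] with t ht ht'
  exact ht.sub ht'

lemma HasSecond.add {f g : ℝ → ℝ} {x a b : ℝ} (hf : HasSecond f x a) (hg : HasSecond g x b) :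
    HasSecond (fun t => f t + g t) x (a + b) := by
  obtain ⟨f', h1, h2⟩ := hf
  obtain ⟨g', h3, h4⟩ := hg
  refine ⟨fun t => f' t + g' t, ?_, h2.add h4⟩
  filter_upwards [h1, h3] with t ht ht'
  exact ht.add ht'

lemma HasSecond.const_mul {f : ℝ → ℝ} {x a : ℝ} (c : ℝ) (hf : HasSecond f x a) :
    HasSecond (fun t => c * f t) x (c * a) := by
  obtain ⟨f', h1, h2⟩ := hf
  refine ⟨fun t => c * f' t, ?_, h2.const_mul c⟩
  filter_upwards [h1] with t ht
  exact ht.const_mul c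

lemma HasSecond.comp_add {f : ℝ → ℝ} {c x a : ℝ} (hf : HasSecond f (c + x) a) :
    HasSecond (fun t => f (c + t)) x a := by
  obtain ⟨f', h1, h2⟩ := hf
  refine ⟨fun t => f' (c + t), ?_, h2.comp_const_add c x⟩
  have hc : Filter.Tendsto (fun t : ℝ => c + t) (nhds x) (nhds (c + x)) :=
    (continuous_const.add continuous_id).tendsto x
  filter_upwards [hc.eventually h1] with t ht
  exact ht.comp_const_add c t

lemma HasSecond.comp_sub {f : ℝ → ℝ} {c x a : ℝ} (hf : HasSecond f (c - x) a) :
    HasSecond (fun t => f (c - t)) x a := by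
  obtain ⟨f', h1, h2⟩ := hf
  refine ⟨fun t => -f' (c - t), ?_, by
    have h := (h2.comp_const_sub c x).neg
    rw [neg_neg] at h
    exact h⟩
  have hc : Filter.Tendsto (fun t : ℝ => c - t) (nhds x) (nhds (c - x)) :=
    (continuous_const.sub continuous_id).tendsto x
  filter_upwards [hc.eventually h1] with t ht
  exact ht.comp_const_sub c t

lemma HasSecond.deriv_deriv {f : ℝ → ℝ} {x a : ℝ} (hf : HasSecond f x a) :
    HasDerivAt (deriv f) a x := by
  obtain ⟨f', h1, h2⟩ := hf
  refine h2.congr_of_eventuallyEq ?_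
  filter_upwards [h1] with t ht
  exact ht.deriv

lemma HasSecond.differentiableAt {f : ℝ → ℝ} {x a : ℝ} (hf : HasSecond f x a) :
    DifferentiableAt ℝ f x := by
  obtain ⟨f', h1, -⟩ := hf
  exact h1.self_of_nhds.differentiableAt

lemma HasSecond.nonpos_of_isLocalMax {f : ℝ → ℝ} {x a : ℝ} (hf : HasSecond f x a)
    (hm : IsLocalMax f x) : a ≤ 0 := by
  by_contra! ha
  have hdd := hf.deriv_deriv
  -- With `0 < a`, `x` would also be a local minimum, so `f` would be locally constant.
  have hmin : IsLocalMin f x :=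
    isLocalMin_of_deriv_deriv_pos (by rwa [hdd.deriv]) hm.deriv_eq_zero
      hf.differentiableAt.continuousAt
  have hconst : f =ᶠ[nhds x] fun _ => f x := by
    filter_upwards [hm, hmin] with t h1 h2
    exact le_antisymm h1 h2
  have h0 : deriv f =ᶠ[nhds x] fun _ => 0 := by
    filter_upwards [hconst.eventuallyEq_nhds] with t ht
    rw [ht.deriv_eq]; simp
  have := hdd.deriv
  rw [h0.deriv_eq] at this
  simp at this
  linarith

/-! ### Phragmén–Lindelöf in the quadrant -/

/-- The barrier `|x|^{2s} + 4/(1-s) (x₁x₂)^s` on the quadrant. For `0 < s < 1` the concave power of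
the harmonic function `x₁x₂` makes it strictly superharmonic. -/
def barrier (s x y : ℝ) : ℝ := (x ^ 2 + y ^ 2) ^ s + 4 / (1 - s) * (x * y) ^ s

/-- The second `x`-derivative of `barrier s` at `(x, y)`. -/
def barrierXX (s x y : ℝ) : ℝ :=
  (s * (s - 1) * (x ^ 2 + y ^ 2) ^ (s - 2) * (4 * x ^ 2) + 2 * s * (x ^ 2 + y ^ 2) ^ (s - 1)) +
    4 / (1 - s) * (s * (s - 1) * (x * y) ^ (s - 2) * y ^ 2)

lemma barrier_comm (s x y : ℝ) : barrier s x y = barrier s y x := by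
  simp only [barrier, add_comm, mul_comm x y]

lemma barrier_hasSecond (s : ℝ) {x y : ℝ} (hx : 0 < x) (hy : 0 < y) :
    HasSecond (fun t => barrier s t y) x (barrierXX s x y) := by
  refine HasSecond.add (f := fun t => (t ^ 2 + y ^ 2) ^ s) ?_
    (HasSecond.const_mul _ (f := fun t => (t * y) ^ s) ?_)
  · have hq : ∀ t : ℝ, HasDerivAt (fun t : ℝ => t ^ 2 + y ^ 2) (2 * t) t := fun t => by
      simpa using (hasDerivAt_pow 2 t).add_const (y ^ 2)
    have hne : ∀ t : ℝ, t ^ 2 + y ^ 2 ≠ 0 := fun t => by positivity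
    refine ⟨fun t => 2 * t * s * (t ^ 2 + y ^ 2) ^ (s - 1), .of_forall fun t => ?_, ?_⟩
    · exact (hq t).rpow_const (Or.inl (hne t))
    · have h1 : HasDerivAt (fun t : ℝ => 2 * t * s) (2 * s) x := by
        simpa using ((hasDerivAt_id x).const_mul 2).mul_const s
      have h2 := (hq x).rpow_const (p := s - 1) (Or.inl (hne x))
      refine (h1.mul h2).congr_deriv ?_
      rw [show s - 1 - 1 = s - 2 by ring]; ring
  · have hq : ∀ t : ℝ, HasDerivAt (fun t : ℝ => t * y) y t := fun t => by
      simpa using (hasDerivAt_id t).mul_const y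
    refine ⟨fun t => y * s * (t * y) ^ (s - 1), ?_, ?_⟩
    · filter_upwards [lt_mem_nhds hx] with t ht
      exact (hq t).rpow_const (Or.inl (by positivity))
    · have h2 := (hq x).rpow_const (p := s - 1) (Or.inl (by positivity))
      refine (h2.const_mul (y * s)).congr_deriv ?_
      rw [show s - 1 - 1 = s - 2 by ring]; ring

lemma barrier_superharmonic {s x y : ℝ} (hs0 : 0 < s) (hs1 : s < 1) (hx : 0 < x) (hy : 0 < y) :
    barrierXX s x y + barrierXX s y x < 0 := by
  have hQ : 0 < x ^ 2 + y ^ 2 := by positivity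
  have hle : x * y ≤ x ^ 2 + y ^ 2 := by nlinarith [sq_nonneg (x - y), mul_pos hx hy]
  have hpow : (x ^ 2 + y ^ 2) ^ (s - 2) ≤ (x * y) ^ (s - 2) :=
    Real.rpow_le_rpow_of_nonpos (mul_pos hx hy) hle (by linarith)
  have hQ1 : (x ^ 2 + y ^ 2) ^ (s - 1) = (x ^ 2 + y ^ 2) ^ (s - 2) * (x ^ 2 + y ^ 2) := by
    rw [← Real.rpow_add_one hQ.ne']; congr 1; ring
  have h1s : 1 - s ≠ 0 := by linarith
  have key : barrierXX s x y + barrierXX s y x =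
      4 * s * (x ^ 2 + y ^ 2) * (s * (x ^ 2 + y ^ 2) ^ (s - 2) - (x * y) ^ (s - 2)) := by
    unfold barrierXX
    rw [add_comm (y ^ 2), mul_comm y x, hQ1]
    field_simp
    ring
  rw [key]
  have hp := Real.rpow_pos_of_pos hQ (s - 2)
  exact mul_neg_of_pos_of_neg (by positivity) (by nlinarith)

/-- Phragmén–Lindelöf principle in the quadrant: a harmonic function vanishing on the boundary,
of growth order less than `2`, is nonpositive. -/
lemma quadrant_nonpos {w : ℝ → ℝ → ℝ} {α A C : ℝ} (hα0 : 0 < α) (hα : α < 2) (hC : 0 ≤ C)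
    (hA : 0 ≤ A)
    (hc : ContinuousOn (fun p : ℝ × ℝ => w p.1 p.2) {p | 0 ≤ p.1 ∧ 0 ≤ p.2})
    (h0x : ∀ y, 0 ≤ y → w 0 y = 0) (h0y : ∀ x, 0 ≤ x → w x 0 = 0)
    (hg : ∀ x y, 0 ≤ x → 0 ≤ y → w x y ≤ C * (A + x + y) ^ α)
    (hh : ∀ x y, 0 < x → 0 < y → ∃ a b, HasSecond (fun t => w t y) x a ∧
      HasSecond (fun t => w x t) y b ∧ a + b = 0)
    {x₀ y₀ : ℝ} (hx₀ : 0 ≤ x₀) (hy₀ : 0 ≤ y₀) : w x₀ y₀ ≤ 0 := by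
  obtain ⟨s, hs, hs1⟩ : ∃ s, α / 2 < s ∧ s < 1 := exists_between (by linarith)
  have hs0 : 0 < s := by linarith
  have hK : 0 < 4 / (1 - s) := div_pos (by norm_num) (by linarith)
  have hB0 : ∀ x y, 0 ≤ x → 0 ≤ y → 0 ≤ barrier s x y := fun x y hx hy => by
    unfold barrier; positivity
  have main : ∀ ε > 0, w x₀ y₀ ≤ ε * barrier s x₀ y₀ := by
    intro ε hε
    -- On a large square the barrier dominates `w` on the two outer sides.
    obtain ⟨R, hR1, hRA, hRx, hRy, hRε⟩ : ∃ R : ℝ, 1 ≤ R ∧ A ≤ R ∧ x₀ ≤ R ∧ y₀ ≤ R ∧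
        C * 3 ^ α / ε ≤ R ^ (2 * s - α) :=
      ((Filter.eventually_ge_atTop 1).and <| (Filter.eventually_ge_atTop A).and <|
        (Filter.eventually_ge_atTop x₀).and <| (Filter.eventually_ge_atTop y₀).and <|
        (tendsto_rpow_atTop (by linarith : 0 < 2 * s - α)).eventually_ge_atTop _).exists
    have hR0 : 0 < R := by linarith
    have hout : ∀ x y, 0 ≤ x → 0 ≤ y → x ≤ R → y ≤ R → (x = R ∨ y = R) →
        w x y ≤ ε * barrier s x y := by
      intro x y hx hy hxR hyR hor
      have e1 : w x y ≤ C * (3 * R) ^ α := (hg x y hx hy).trans (by gcongr; linarith)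
      have e2 : C * (3 * R) ^ α ≤ ε * R ^ (2 * s) := by
        rw [Real.mul_rpow (by norm_num) hR0.le]
        rw [div_le_iff₀ hε] at hRε
        have : R ^ (2 * s) = R ^ (2 * s - α) * R ^ α := by
          rw [← Real.rpow_add hR0]; congr 1; ring
        rw [this]
        nlinarith [Real.rpow_pos_of_pos hR0 α]
      have e3 : R ^ (2 * s) ≤ (x ^ 2 + y ^ 2) ^ s := by
        rw [Real.rpow_mul hR0.le]
        norm_cast
        refine Real.rpow_le_rpow (by positivity) ?_ hs0.le
        rcases hor with rfl | rfl <;> nlinarith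
      have e4 : (x ^ 2 + y ^ 2) ^ s ≤ barrier s x y := by
        unfold barrier; exact le_add_of_nonneg_right (by positivity)
      calc w x y ≤ ε * R ^ (2 * s) := e1.trans e2
        _ ≤ ε * barrier s x y := by gcongr; exact e3.trans e4
    have hBc : Continuous fun p : ℝ × ℝ => barrier s p.1 p.2 := by
      unfold barrier
      exact (((continuous_fst.pow 2).add (continuous_snd.pow 2)).rpow_const fun _ =>
        Or.inr hs0.le).add (continuous_const.mul ((continuous_fst.mul continuous_snd).rpow_const
          fun _ => Or.inr hs0.le))
    have hsub : Icc 0 R ×ˢ Icc 0 R ⊆ {p : ℝ × ℝ | 0 ≤ p.1 ∧ 0 ≤ p.2} :=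
      fun p hp => ⟨hp.1.1, hp.2.1⟩
    obtain ⟨⟨x, y⟩, ⟨⟨hx0, hxR⟩, hy0, hyR⟩, hmax⟩ :=
      ((isCompact_Icc (a := (0:ℝ)) (b := R)).prod (isCompact_Icc (a := (0:ℝ)) (b := R))).exists_isMaxOn
        ⟨(x₀, y₀), ⟨hx₀, hRx⟩, hy₀, hRy⟩
        ((hc.mono hsub).sub ((continuous_const (y := ε)).mul hBc |>.continuousOn))
    simp only at hx0 hxR hy0 hyR
    have hm : ∀ a b, 0 ≤ a → a ≤ R → 0 ≤ b → b ≤ R →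
        w a b - ε * barrier s a b ≤ w x y - ε * barrier s x y :=
      fun a b h1 h2 h3 h4 => hmax (a := (a, b)) ⟨⟨h1, h2⟩, h3, h4⟩
    suffices h : w x y - ε * barrier s x y ≤ 0 by
      linarith [hm x₀ y₀ hx₀ hRx hy₀ hRy]
    by_contra! hpos
    have hxp : 0 < x := hx0.lt_of_ne' fun h => by
      subst h
      linarith [h0x y hy0, mul_nonneg hε.le (hB0 0 y le_rfl hy0)]
    have hyp : 0 < y := hy0.lt_of_ne' fun h => by
      subst h
      linarith [h0y x hx0, mul_nonneg hε.le (hB0 x 0 hx0 le_rfl)]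
    have hxl : x < R := hxR.lt_of_ne fun h => by
      linarith [hout x y hx0 hy0 hxR hyR (Or.inl h)]
    have hyl : y < R := hyR.lt_of_ne fun h => by
      linarith [hout x y hx0 hy0 hxR hyR (Or.inr h)]
    obtain ⟨a, b, ha, hb, hab⟩ := hh x y hxp hyp
    have h1 := (ha.sub ((barrier_hasSecond s hxp hyp).const_mul ε)).nonpos_of_isLocalMax (by
      filter_upwards [Icc_mem_nhds hxp hxl] with t ht
      exact hm t y ht.1 ht.2 hy0 hyR)
    have hB2 : HasSecond (fun t => barrier s x t) y (barrierXX s y x) := by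
      simpa only [barrier_comm s x] using barrier_hasSecond s hyp hxp
    have h2 := (hb.sub (hB2.const_mul ε)).nonpos_of_isLocalMax (by
      filter_upwards [Icc_mem_nhds hyp hyl] with t ht
      exact hm x t hx0 hxR ht.1 ht.2)
    nlinarith [barrier_superharmonic hs0 hs1 hxp hyp]
  by_contra! hpos
  have hB := hB0 x₀ y₀ hx₀ hy₀
  have := main (w x₀ y₀ / (2 * (barrier s x₀ y₀ + 1))) (by positivity)
  rw [div_mul_eq_mul_div, le_div_iff₀ (by positivity)] at this
  nlinarith

/-! ### Restriction to coordinate lines -/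

lemma hasDerivAt_fst_line (x y : ℝ) :
    HasDerivAt (fun t : ℝ => (!₂[t, y] : E2)) (EuclideanSpace.single 0 1) x := by
  have h : (fun t : ℝ => (!₂[t, y] : E2)) =
      fun t => t • (EuclideanSpace.single 0 1 : E2) + !₂[0, y] := by
    ext t i; fin_cases i <;> simp
  rw [h]
  simpa using ((hasDerivAt_id x).smul_const (EuclideanSpace.single 0 1 : E2)).add_const !₂[0, y]

lemma hasDerivAt_snd_line (x y : ℝ) :
    HasDerivAt (fun t : ℝ => (!₂[x, t] : E2)) (EuclideanSpace.single 1 1) y := by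
  have h : (fun t : ℝ => (!₂[x, t] : E2)) =
      fun t => t • (EuclideanSpace.single 1 1 : E2) + !₂[x, 0] := by
    ext t i; fin_cases i <;> simp
  rw [h]
  simpa using ((hasDerivAt_id y).smul_const (EuclideanSpace.single 1 1 : E2)).add_const !₂[x, 0]

lemma isOpen_Hup : IsOpen Hup :=
  isOpen_lt continuous_const (PiLp.continuous_apply 2 _ 1)

/-- Along a curve in `Hup` with constant velocity `e_i`, the second derivative of `v` is
`∂_i ∂_i v`. -/
lemma hasSecond_line {v : E2 → ℝ} (hs : ContDiffOn ℝ 2 v Hup) (i : Fin 2) {γ : ℝ → E2}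
    (hγ : ∀ t, HasDerivAt γ (EuclideanSpace.single i 1) t) {x : ℝ} (hx : γ x ∈ Hup) :
    HasSecond (fun t => v (γ t)) x (pd2 i i v (γ x)) := by
  refine ⟨fun t => pd i v (γ t), ?_, ?_⟩
  · filter_upwards [(hγ x).continuousAt.eventually (isOpen_Hup.mem_nhds hx)] with t ht
    have hd : DifferentiableAt ℝ v (γ t) :=
      (hs.contDiffAt (isOpen_Hup.mem_nhds ht)).differentiableAt (by norm_num)
    exact hd.hasFDerivAt.comp_hasDerivAt t (hγ t)
  · have hf : ContDiffAt ℝ 1 (fderiv ℝ v) (γ x) :=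
      (hs.contDiffAt (isOpen_Hup.mem_nhds hx)).fderiv_right (by norm_num)
    have hd : DifferentiableAt ℝ (pd i v) (γ x) :=
      (hf.differentiableAt (by norm_num)).clm_apply (differentiableAt_const _)
    exact hd.hasFDerivAt.comp_hasDerivAt x (hγ x)

lemma norm_vec_le (x y : ℝ) : ‖(!₂[x, y] : E2)‖ ≤ |x| + |y| := by
  rw [EuclideanSpace.norm_eq, Real.sqrt_le_left (by positivity)]
  simp only [Fin.sum_univ_two, Real.norm_eq_abs]
  simp
  nlinarith [abs_nonneg x, abs_nonneg y, sq_abs x, sq_abs y,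
    mul_nonneg (abs_nonneg x) (abs_nonneg y)]

lemma mem_closure_Hup (x : E2) : x ∈ closure Hup ↔ 0 ≤ x 1 := by
  constructor
  · intro h
    have hcl : IsClosed {z : E2 | 0 ≤ z 1} :=
      isClosed_le continuous_const (PiLp.continuous_apply 2 _ 1)
    have hsub : Hup ⊆ {z : E2 | 0 ≤ z 1} := fun z (hz : 0 < z 1) => hz.le
    exact closure_minimal hsub hcl h
  · intro h
    have hx : x = !₂[x 0, x 1] := by ext i; fin_cases i <;> rfl
    have hcont : Filter.Tendsto (fun t : ℝ => (!₂[x 0, t] : E2)) (nhdsWithin (x 1) (Ioi (x 1)))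
        (nhds x) := by
      have h1 := (hasDerivAt_snd_line (x 0) (x 1)).continuousAt.tendsto.mono_left
        (nhdsWithin_le_nhds (s := Ioi (x 1)))
      rwa [← hx] at h1
    refine mem_closure_of_tendsto hcont ?_
    filter_upwards [self_mem_nhdsWithin] with t ht
    change 0 < (!₂[x 0, t] : E2) 1
    simpa using lt_of_le_of_lt h ht

/-! ### Symmetry and conclusion -/

/-- `v` is symmetric about every vertical line: its antisymmetrization about `{x₁ = c}` vanishes on
the boundary of a quadrant, where growth of order less than `2` forces it to vanish. -/
lemma reflection_le (α₀ : ℝ) (hα₀ : α₀ ∈ Set.Ioo (1:ℝ) 2) (v : E2 → ℝ)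
    (hc : ContinuousOn v (closure Hup)) (hs : ContDiffOn ℝ 2 v Hup)
    (hh : ∀ x ∈ Hup, pd2 0 0 v x + pd2 1 1 v x = 0)
    (hb : ∀ x : E2, x 1 = 0 → v x = 0)
    (hg : ∀ x ∈ Hup, |v x| ≤ ‖x‖ ^ α₀) (c : ℝ) {x y : ℝ} (hx : 0 ≤ x) (hy : 0 ≤ y) :
    v !₂[c + x, y] = v !₂[c - x, y] := by
  obtain ⟨h1, h2⟩ := hα₀
  have hbd : ∀ a y, 0 ≤ y → |v !₂[a, y]| ≤ (|a| + y) ^ α₀ := by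
    intro a y hy
    rcases hy.eq_or_lt with rfl | hy'
    · rw [hb _ (by simp), abs_zero]; positivity
    · refine (hg _ (show 0 < (!₂[a, y] : E2) 1 by simpa using hy')).trans ?_
      have := norm_vec_le a y
      rw [abs_of_pos hy'] at this
      exact Real.rpow_le_rpow (norm_nonneg _) this (by linarith)
  have hcp : ∀ g : ℝ → ℝ, Continuous g → ContinuousOn
      (fun p : ℝ × ℝ => v !₂[g p.1, p.2]) {p | 0 ≤ p.1 ∧ 0 ≤ p.2} := by
    intro g hgc
    refine hc.comp (f := fun p : ℝ × ℝ => (!₂[g p.1, p.2] : E2)) ?_ ?_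
    · refine Continuous.continuousOn ((PiLp.continuous_toLp 2 _).comp (continuous_pi fun i => ?_))
      fin_cases i
      · exact hgc.comp continuous_fst
      · exact continuous_snd
    · intro p hp
      rw [mem_closure_Hup]
      simpa using hp.2
  have hplus := hcp (fun x => c + x) (by fun_prop)
  have hminus := hcp (fun x => c - x) (by fun_prop)
  have hxx : ∀ x y, 0 < y → HasSecond (fun t => v !₂[t, y]) x (pd2 0 0 v !₂[x, y]) :=
    fun x y hy => hasSecond_line hs 0 (fun t => hasDerivAt_fst_line t y)
      (show 0 < (!₂[x, y] : E2) 1 by simpa using hy)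
  have hyy : ∀ x y, 0 < y → HasSecond (fun t => v !₂[x, t]) y (pd2 1 1 v !₂[x, y]) :=
    fun x y hy => hasSecond_line hs 1 (fun t => hasDerivAt_snd_line x t)
      (show 0 < (!₂[x, y] : E2) 1 by simpa using hy)
  have hlap : ∀ x y, 0 < y → pd2 0 0 v !₂[x, y] + pd2 1 1 v !₂[x, y] = 0 :=
    fun x y hy => hh _ (show 0 < (!₂[x, y] : E2) 1 by simpa using hy)
  have hbd' : ∀ a x y, 0 ≤ x → 0 ≤ y → |a| ≤ |c| + x →
      |v !₂[a, y]| ≤ (|c| + x + y) ^ α₀ := fun a x y hx hy ha =>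
    (hbd a y hy).trans (Real.rpow_le_rpow (by positivity) (by linarith) (by linarith))
  have hap : ∀ x, 0 ≤ x → |c + x| ≤ |c| + x := fun x hx =>
    (abs_add_le c x).trans (by rw [abs_of_nonneg hx])
  have ham : ∀ x, 0 ≤ x → |c - x| ≤ |c| + x := fun x hx =>
    by
    simpa [sub_eq_add_neg, abs_of_nonneg hx] using abs_add_le c (-x)
  have k1 := quadrant_nonpos (w := fun x y => v !₂[c + x, y] - v !₂[c - x, y]) (C := 2)
    (by linarith) h2 (by norm_num) (abs_nonneg c) (hplus.sub hminus)
    (by simp) (fun x _ => by rw [hb _ (by simp), hb _ (by simp), sub_zero])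
    (fun x y hx hy => by
      linarith [abs_le.1 (hbd' _ x y hx hy (hap x hx)), abs_le.1 (hbd' _ x y hx hy (ham x hx))])
    (fun x y hx hy => ⟨_, _, ((hxx (c + x) y hy).comp_add).sub ((hxx (c - x) y hy).comp_sub),
      (hyy (c + x) y hy).sub (hyy (c - x) y hy), by
        linarith [hlap (c + x) y hy, hlap (c - x) y hy]⟩) hx hy
  have k2 := quadrant_nonpos (w := fun x y => v !₂[c - x, y] - v !₂[c + x, y]) (C := 2)
    (by linarith) h2 (by norm_num) (abs_nonneg c) (hminus.sub hplus)
    (by simp) (fun x _ => by rw [hb _ (by simp), hb _ (by simp), sub_zero])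
    (fun x y hx hy => by
      linarith [abs_le.1 (hbd' _ x y hx hy (hap x hx)), abs_le.1 (hbd' _ x y hx hy (ham x hx))])
    (fun x y hx hy => ⟨_, _, ((hxx (c - x) y hy).comp_sub).sub ((hxx (c + x) y hy).comp_add),
      (hyy (c - x) y hy).sub (hyy (c + x) y hy), by
        linarith [hlap (c + x) y hy, hlap (c - x) y hy]⟩) hx hy
  exact le_antisymm (sub_nonpos.1 k1) (sub_nonpos.1 k2)

/-- A function on `(0, ∞)` with zero second derivative and `|g y| ≤ y ^ α`, where `1 < α`,
vanishes. -/
lemma affine_zero {g : ℝ → ℝ} {α : ℝ} (hα : 1 < α) (h2 : ∀ y, 0 < y → HasSecond g y 0)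
    (hg : ∀ y, 0 < y → |g y| ≤ y ^ α) {y : ℝ} (hy : 0 < y) : g y = 0 := by
  have hconst : ∀ f : ℝ → ℝ, (∀ t, 0 < t → HasDerivAt f 0 t) → ∀ t, 0 < t → f t = f y := by
    intro f hf t ht
    exact isOpen_Ioi.is_const_of_deriv_eq_zero isPreconnected_Ioi
      (fun t ht => (hf t ht).differentiableAt.differentiableWithinAt)
      (fun t ht => (hf t ht).deriv) ht hy
  set a := deriv g y with ha
  have hd : ∀ t, 0 < t → deriv g t = a := hconst _ fun t ht => (h2 t ht).deriv_deriv
  have hlin : ∀ t, 0 < t → g t - a * t = g y - a * y :=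
    hconst (fun t => g t - a * t) fun t ht => by
      have h := (h2 t ht).differentiableAt.hasDerivAt
      rw [hd t ht] at h
      exact (h.sub ((hasDerivAt_id t).const_mul a)).congr_deriv (by simp)
  set b := g y - a * y with hbdef
  -- `g t = a t + b`; letting `t → 0` first in `g t`, then in `g t / t`, gives `b = 0`, `a = 0`.
  have lim : ∀ p : ℝ, 0 < p → Filter.Tendsto (fun t : ℝ => t ^ p) (nhdsWithin 0 (Ioi 0)) (nhds 0) := by
    intro p hp
    have := (Real.continuous_rpow_const hp.le).tendsto 0
    rw [Real.zero_rpow hp.ne'] at this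
    exact this.mono_left nhdsWithin_le_nhds
  have hg0 : Filter.Tendsto g (nhdsWithin 0 (Ioi 0)) (nhds 0) := by
    refine squeeze_zero_norm' ?_ (lim α (by linarith))
    filter_upwards [self_mem_nhdsWithin] with t ht using hg t ht
  have hb0 : b = 0 := by
    have h1 : Filter.Tendsto (fun t => g t - a * t) (nhdsWithin 0 (Ioi 0)) (nhds (0 - a * 0)) :=
      hg0.sub ((continuous_const.mul continuous_id).continuousWithinAt)
    have h3 : Filter.Tendsto (fun t => g t - a * t) (nhdsWithin 0 (Ioi 0)) (nhds b) := by
      refine tendsto_const_nhds.congr' ?_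
      filter_upwards [self_mem_nhdsWithin] with t ht using (hlin t ht).symm
    simpa using tendsto_nhds_unique h3 h1
  have ha0 : |a| ≤ 0 := by
    refine ge_of_tendsto (lim (α - 1) (by linarith)) ?_
    filter_upwards [self_mem_nhdsWithin] with t ht
    have ht' : (0:ℝ) < t := ht
    have h1 : g t = a * t := by linarith [hlin t ht]
    have h3 := hg t ht
    rw [h1, abs_mul, abs_of_pos ht'] at h3
    rw [Real.rpow_sub_one ht'.ne', le_div_iff₀ ht']
    exact h3
  have ha1 : a = 0 := abs_eq_zero.1 (le_antisymm ha0 (abs_nonneg a))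
  simpa [ha1, hb0] using hbdef.symm

/-- A Liouville theorem: a harmonic function on the upper half-plane vanishing on the
boundary line and bounded by |x|^{α₀} with α₀ ∈ (1,2) is identically zero. -/
theorem stmt13 (α₀ : ℝ) (hα₀ : α₀ ∈ Set.Ioo (1:ℝ) 2) (v : E2 → ℝ)
    (hc : ContinuousOn v (closure Hup)) (hs : ContDiffOn ℝ 2 v Hup)
    (hh : ∀ x ∈ Hup, pd2 0 0 v x + pd2 1 1 v x = 0)
    (hb : ∀ x : E2, x 1 = 0 → v x = 0)
    (hg : ∀ x ∈ Hup, |v x| ≤ ‖x‖ ^ α₀) :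
    ∀ x ∈ closure Hup, v x = 0 := by
  intro x hx
  rw [mem_closure_Hup] at hx
  rcases hx.eq_or_lt with h | hpos
  · exact hb x h.symm
  have mem : ∀ a y : ℝ, 0 < y → !₂[a, y] ∈ Hup := fun a y hy =>
    show 0 < (!₂[a, y] : E2) 1 by simpa using hy
  have hsymm : ∀ c t y : ℝ, 0 ≤ t → 0 ≤ y → v !₂[c + t, y] = v !₂[c - t, y] :=
    fun c t y ht hy => reflection_le α₀ hα₀ v hc hs hh hb hg c ht hy
  -- The points `(a, y)` and `(0, y)` are mirror images in the line `{x₁ = a / 2}`.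
  have hindep : ∀ a y : ℝ, 0 ≤ y → v !₂[a, y] = v !₂[0, y] := by
    intro a y hy
    rcases le_total 0 a with ha | ha
    · simpa using hsymm (a / 2) (a / 2) y (by linarith) hy
    · have := hsymm (a / 2) (-(a / 2)) y (by linarith) hy
      simpa using this.symm
  have hxx : ∀ y : ℝ, 0 < y → pd2 0 0 v !₂[0, y] = 0 := by
    intro y hy
    have h := hasSecond_line hs 0 (fun t => hasDerivAt_fst_line t y) (mem 0 y hy)
    simp only [hindep _ y hy.le] at h
    have h' := h.deriv_deriv.deriv
    simpa using h'.symm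
  have h2 : ∀ y : ℝ, 0 < y → HasSecond (fun t => v !₂[0, t]) y 0 := by
    intro y hy
    have h := hasSecond_line hs 1 (fun t => hasDerivAt_snd_line 0 t) (mem 0 y hy)
    have e := hh _ (mem 0 y hy)
    rw [hxx y hy, zero_add] at e
    rwa [e] at h
  have hz := affine_zero hα₀.1 h2 (fun y hy => by
    refine (hg _ (mem 0 y hy)).trans ?_
    have hn := norm_vec_le 0 y
    rw [abs_zero, zero_add, abs_of_pos hy] at hn
    exact Real.rpow_le_rpow (norm_nonneg _) hn (by linarith [hα₀.1])) hpos
  have hx2 : x = !₂[x 0, x 1] := by ext i; fin_cases i <;> rfl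
  rw [hx2, hindep _ _ hpos.le]
  exact hz
end
end
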